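/- Let m and n be positive integers. There exists a (totally filled) Heffter array H(m,n) — that is, a function A : Fin m → Fin n → ZMod (2*m*n+1) such that every row sums to 0, every column sums to 0, and for every nonzero x in ZMod (2*m*n+1) there is exactly one cell (i,j) with A i j = x or A i j = -x — if and only if m ≥ 3 and n ≥ 3. -/

import Mathlib

set_option linter.all false
set_option linter.unusedSimpArgs false
set_option linter.unreachableTactic false
set_option linter.unusedTactic false

/-- An integer zero-sum array covering every element of `S` up to sign. -/
def HA (m n : ℕ) (S : Set ℤ) : Prop :=
  ∃ A : Fin m → Fin n → ℤ, (∀ i, ∑ j, A i j = 0) ∧ (∀ j, ∑ i, A i j = 0) ∧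
    ∀ y ∈ S, ∃ i j, A i j = y ∨ A i j = -y

/-- The `i`-th even number after `2 r`. -/
def md (r : ℤ) (i : ℕ) : ℤ := 2 * (r + i)

/-- A run of consecutive even numbers. -/
def mid (r : ℤ) (c : ℕ) : Set ℤ := {z | ∃ i < c, z = md r i}

/-- The first `l` odd numbers. -/
def odl (l : ℕ) : Set ℤ := {z | ∃ i < l, z = 2 * (i : ℤ) + 1}

/-- Union of the first `T` sets. -/
def UU (g : ℕ → Set ℤ) (T : ℕ) : Set ℤ := {z | ∃ i < T, z ∈ g i}

theorem HA.mono {m n : ℕ} {S S' : Set ℤ} (h : HA m n S) (hs : S' ⊆ S) : HA m n S' := by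
  obtain ⟨A, h1, h2, h3⟩ := h
  exact ⟨A, h1, h2, fun y hy => h3 y (hs hy)⟩

theorem HA.tr {m n : ℕ} {S : Set ℤ} (h : HA m n S) : HA n m S := by
  obtain ⟨A, h1, h2, h3⟩ := h
  refine ⟨fun i j => A j i, h2, h1, fun y hy => ?_⟩
  obtain ⟨i, j, h⟩ := h3 y hy
  exact ⟨j, i, h⟩

theorem HA.app {m n n' : ℕ} {S S' : Set ℤ} (h : HA m n S) (h' : HA m n' S') :
    HA m (n + n') (S ∪ S') := by
  obtain ⟨A, h1, h2, h3⟩ := h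
  obtain ⟨B, k1, k2, k3⟩ := h'
  refine ⟨fun i => Fin.append (A i) (B i), fun i => ?_, fun j => ?_, fun y hy => ?_⟩
  · rw [Fin.sum_univ_add]; simp [h1, k1]
  · refine Fin.addCases (fun j => ?_) (fun j => ?_) j
    · simp [h2]
    · simp [k2]
  · rcases hy with hy | hy
    · obtain ⟨i, j, h⟩ := h3 y hy
      exact ⟨i, Fin.castAdd _ j, by simpa using h⟩
    · obtain ⟨i, j, h⟩ := k3 y hy
      exact ⟨i, Fin.natAdd _ j, by simpa using h⟩

theorem HA.vapp {m m' n : ℕ} {S S' : Set ℤ} (h : HA m n S) (h' : HA m' n S') :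
    HA (m + m') n (S ∪ S') := (h.tr.app h'.tr).tr

theorem HA.zero (m : ℕ) (S : Set ℤ) (hS : S ⊆ ∅) : HA m 0 S :=
  ⟨fun _ _ => 0, by simp, by simp, fun y hy => (hS hy).elim⟩

theorem mid_add (r : ℤ) (a b : ℕ) : mid r (a + b) ⊆ mid r a ∪ mid (r + a) b := by
  rintro z ⟨i, hi, rfl⟩
  by_cases h : i < a
  · exact Or.inl ⟨i, h, rfl⟩
  · exact Or.inr ⟨i - a, by omega, by simp only [md]; omega⟩

theorem mid_zero (r : ℤ) : mid r 0 ⊆ ∅ := by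
  rintro z ⟨i, hi, rfl⟩; omega

/-- Blocks filled by arbitrary runs of consecutive even numbers. -/
def MB (p q : ℕ) : Prop := ∀ r, HA p q (mid r (p * q))

theorem MB.app {p q q' : ℕ} (h : MB p q) (h' : MB p q') : MB p (q + q') := by
  intro r
  refine ((h r).app (h' (r + (p * q : ℕ)))).mono ?_
  rw [mul_add]
  exact mid_add _ _ _

theorem MB.tr {p q : ℕ} (h : MB p q) : MB q p := by
  intro r; rw [mul_comm]; exact (h r).tr

theorem MB.vapp {p p' q : ℕ} (h : MB p q) (h' : MB p' q) : MB (p + p') q :=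
  (h.tr.app h'.tr).tr

theorem MB.zero (p : ℕ) : MB p 0 := fun r => HA.zero _ _ (mid_zero r)

theorem MB.rep {p q : ℕ} (h : MB p q) (t : ℕ) : MB p (q * t) := by
  induction t with
  | zero => exact MB.zero p
  | succ t ih => exact ih.app h

theorem MB.vrep {p q : ℕ} (h : MB p q) (t : ℕ) : MB (p * t) q := (h.tr.rep t).tr

/-- A group which can be used both in strips of width three and five. -/
def GG (S : Set ℤ) : Prop := HA 3 4 S ∧ ∀ r, HA 5 4 (S ∪ mid r 8)

theorem strip3 (g : ℕ → Set ℤ) (t : ℕ) (h : ∀ i < t, HA 3 4 (g i)) :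
    HA 3 (4 * t) (UU g t) := by
  induction t with
  | zero => exact HA.zero _ _ (by rintro z ⟨i, hi, _⟩; omega)
  | succ t ih =>
    refine ((ih fun i hi => h i (by omega)).app (h t (by omega))).mono ?_
    rintro z ⟨i, hi, hz⟩
    by_cases hit : i < t
    · exact Or.inl ⟨i, hit, hz⟩
    · obtain rfl : i = t := by omega
      exact Or.inr hz

theorem strip5 (g : ℕ → Set ℤ) (t : ℕ) (h : ∀ i < t, GG (g i)) :
    ∀ r, HA 5 (4 * t) (UU g t ∪ mid r (8 * t)) := by
  induction t with
  | zero =>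
    intro r
    refine HA.zero _ _ ?_
    rintro z (⟨i, hi, _⟩ | h)
    · omega
    · exact mid_zero _ h
  | succ t ih =>
    intro r
    refine ((ih (fun i hi => h i (by omega)) r).app ((h t (by omega)).2 (r + (8 * t : ℕ)))).mono ?_
    rintro z (⟨i, hi, hz⟩ | hz)
    · by_cases hit : i < t
      · exact Or.inl (Or.inl ⟨i, hit, hz⟩)
      · obtain rfl : i = t := by omega
        exact Or.inr (Or.inl hz)
    · rw [mul_add, mul_one] at hz
      rcases mid_add _ _ _ hz with hz | hz
      · exact Or.inl (Or.inr hz)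
      · exact Or.inr (Or.inr hz)

theorem UU_add (g : ℕ → Set ℤ) (t s : ℕ) :
    UU g (t + s) ⊆ UU g t ∪ UU (fun i => g (t + i)) s := by
  rintro z ⟨i, hi, hz⟩
  by_cases h : i < t
  · exact Or.inl ⟨i, h, hz⟩
  · exact Or.inr ⟨i - t, by omega, by simpa [Nat.add_sub_cancel' (not_lt.mp h)] using hz⟩

/-- The Heffter property. -/
def HE (m n : ℕ) : Prop :=
  ∃ A : Fin m → Fin n → ZMod (2 * m * n + 1),
      (∀ i : Fin m, ∑ j : Fin n, A i j = 0) ∧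
      (∀ j : Fin n, ∑ i : Fin m, A i j = 0) ∧
      (∀ x : ZMod (2 * m * n + 1), x ≠ 0 →
        ∃! p : Fin m × Fin n, A p.1 p.2 = x ∨ A p.1 p.2 = -x)

theorem HA.fin {m n : ℕ} {S : Set ℤ} (h : HA m n S) (k l : ℕ) (hkl : k + l = m * n)
    (hS : mid 1 k ∪ odl l ⊆ S) : HE m n := by
  obtain ⟨A, h1, h2, h3⟩ := h
  have hN : ((2 * m * n + 1 : ℕ) : ℤ) = 2 * (k + l) + 1 := by
    rw [mul_assoc, ← hkl]; push_cast; ring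
  have hcov : ∀ y : Fin (m * n), ∃ p : Fin m × Fin n,
      ((A p.1 p.2 : ℤ) : ZMod (2 * m * n + 1)) = 2 * ((y : ℕ) + 1 : ℕ) ∨
      ((A p.1 p.2 : ℤ) : ZMod (2 * m * n + 1)) = -(2 * ((y : ℕ) + 1 : ℕ)) := by
    intro y
    by_cases hy : (y : ℕ) < k
    · obtain ⟨i, j, h⟩ := h3 _ (hS (Or.inl ⟨y, hy, rfl⟩))
      refine ⟨(i, j), ?_⟩
      rcases h with h | h
      · left; rw [h]; simp only [md]; push_cast; ring
      · right; rw [h]; simp only [md]; push_cast; ring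
    · have hyl := y.2
      obtain ⟨i, j, h⟩ := h3 _ (hS (Or.inr ⟨k + l - 1 - y, by omega, rfl⟩))
      have e : 2 * (((k + l - 1 - (y : ℕ) : ℕ)) : ℤ) + 1
          = ((2 * m * n + 1 : ℕ) : ℤ) - 2 * (((y : ℕ) + 1 : ℕ) : ℤ) := by
        rw [hN]; omega
      rw [e] at h
      refine ⟨(i, j), ?_⟩
      rcases h with h | h
      · right; rw [h]; rw [Int.cast_sub, Int.cast_natCast, ZMod.natCast_self]; push_cast; ring
      · left; rw [h]; rw [Int.cast_neg, Int.cast_sub, Int.cast_natCast, ZMod.natCast_self]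
        push_cast; ring
  have hrep : ∀ x : ZMod (2 * m * n + 1), x ≠ 0 → ∃ y : Fin (m * n),
      x = 2 * ((y : ℕ) + 1 : ℕ) ∨ x = -(2 * ((y : ℕ) + 1 : ℕ)) := by
    intro x hx
    have hM : ((2 * m * n + 1 : ℕ) : ZMod (2 * m * n + 1)) = 0 := ZMod.natCast_self _
    have hxv : ((x.val : ℕ) : ZMod (2 * m * n + 1)) = x := ZMod.natCast_zmod_val x
    have hlt : x.val < 2 * (m * n) + 1 := by
      have := ZMod.val_lt x; rw [← mul_assoc]; exact this
    have hpos : x.val ≠ 0 := by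
      intro h; exact hx ((ZMod.val_eq_zero x).1 h)
    rcases Nat.even_or_odd' x.val with ⟨c, hc | hc⟩
    · refine ⟨⟨c - 1, by omega⟩, Or.inl ?_⟩
      have e : c - 1 + 1 = c := by omega
      show x = 2 * ((c - 1 + 1 : ℕ) : ZMod (2 * m * n + 1))
      have e2 : ((x.val : ℕ) : ZMod (2 * m * n + 1)) = ((2 * c : ℕ) : ZMod (2 * m * n + 1)) :=
        congrArg _ hc
      rw [hxv] at e2
      rw [e, e2]; push_cast; ring
    · refine ⟨⟨m * n - c - 1, by omega⟩, Or.inr ?_⟩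
      have e : 2 * m * n + 1 = x.val + 2 * (m * n - c - 1 + 1) := by
        have := mul_assoc 2 m n; omega
      have e2 : ((2 * m * n + 1 : ℕ) : ZMod (2 * m * n + 1))
          = ((x.val + 2 * (m * n - c - 1 + 1) : ℕ) : ZMod (2 * m * n + 1)) := congrArg _ e
      rw [hM] at e2
      rw [Nat.cast_add, hxv, Nat.cast_mul] at e2
      rw [eq_neg_iff_add_eq_zero]
      simpa using e2.symm
  choose f hf using hcov
  have huniq : ∀ (v : ZMod (2 * m * n + 1)) (y z : Fin (m * n)),
      (v = 2 * ((y : ℕ) + 1 : ℕ) ∨ v = -(2 * ((y : ℕ) + 1 : ℕ))) →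
      (v = 2 * ((z : ℕ) + 1 : ℕ) ∨ v = -(2 * ((z : ℕ) + 1 : ℕ))) → y = z := by
    intro v y z hy hz
    have key : (((2 * (((y : ℕ) : ℤ) - z)) : ℤ) : ZMod (2 * m * n + 1)) = 0 ∨
        (((2 * (((y : ℕ) : ℤ) + z + 2)) : ℤ) : ZMod (2 * m * n + 1)) = 0 := by
      push_cast at hy hz ⊢
      rcases hy with hy | hy <;> rcases hz with hz | hz <;> rw [hy] at hz
      · left; linear_combination hz
      · right; linear_combination hz
      · right; linear_combination -hz
      · left; linear_combination -hz
    have yl := y.2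
    have zl := z.2
    rw [ZMod.intCast_zmod_eq_zero_iff_dvd, ZMod.intCast_zmod_eq_zero_iff_dvd, hN] at key
    have hkl' : (k : ℤ) + l = ((m * n : ℕ) : ℤ) := by exact_mod_cast hkl
    rcases key with ⟨c, hc⟩ | ⟨c, hc⟩
    · have : c = 0 := by
        have a1 : c < 1 := by
          by_contra hh
          have : (2 * ((k : ℤ) + l) + 1) * 1 ≤ (2 * ((k : ℤ) + l) + 1) * c :=
            mul_le_mul_of_nonneg_left (by omega) (by omega)
          omega
        have a2 : -1 < c := by
          by_contra hh
          have : (2 * ((k : ℤ) + l) + 1) * c ≤ (2 * ((k : ℤ) + l) + 1) * (-1) :=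
            mul_le_mul_of_nonneg_left (by omega) (by omega)
          omega
        omega
      subst this
      ext; omega
    · exfalso
      have a1 : c < 2 := by
        by_contra hh
        have : (2 * ((k : ℤ) + l) + 1) * 2 ≤ (2 * ((k : ℤ) + l) + 1) * c :=
          mul_le_mul_of_nonneg_left (by omega) (by omega)
        omega
      have a2 : 0 < c := by
        by_contra hh
        have : (2 * ((k : ℤ) + l) + 1) * c ≤ (2 * ((k : ℤ) + l) + 1) * 0 :=
          mul_le_mul_of_nonneg_left (by omega) (by omega)
        omega
      obtain rfl : c = 1 := by omega
      omega
  have hfinj : Function.Injective f := by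
    intro y z hyz
    have hy := hf y
    rw [hyz] at hy
    exact huniq _ y z hy (hf z)
  have hfsurj : Function.Surjective f :=
    ((Fintype.bijective_iff_injective_and_card f).2 ⟨hfinj, by simp⟩).2
  refine ⟨fun i j => ((A i j : ℤ) : ZMod (2 * m * n + 1)), fun i => ?_, fun j => ?_, ?_⟩
  · rw [← Int.cast_sum, h1, Int.cast_zero]
  · rw [← Int.cast_sum, h2, Int.cast_zero]
  · intro x hx
    obtain ⟨y, hy⟩ := hrep x hx
    refine ⟨f y, ?_, ?_⟩
    · have := hf y
      rcases hy with rfl | rfl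
      · exact this
      · rw [neg_neg]; exact this.symm
    · intro p hp
      obtain ⟨z, rfl⟩ := hfsurj p
      have hz := hf z
      have hp' : ((A (f z).1 (f z).2 : ℤ) : ZMod (2 * m * n + 1)) = 2 * ((y : ℕ) + 1 : ℕ) ∨
          ((A (f z).1 (f z).2 : ℤ) : ZMod (2 * m * n + 1)) = -(2 * ((y : ℕ) + 1 : ℕ)) := by
        rcases hy with rfl | rfl
        · exact hp
        · rw [neg_neg] at hp; exact hp.symm
      rw [huniq _ z y hz hp']

theorem b44 (r : ℤ) : HA 4 4 (mid r 16) := by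
  refine ⟨![![md r 0, md r 11, -(md r 8), -(md r 3)],
    ![-(md r 5), md r 4, -(md r 9), md r 10],
    ![-(md r 7), -(md r 1), md r 2, md r 6],
    ![md r 12, -(md r 14), md r 15, -(md r 13)]], fun i => ?_, fun j => ?_, ?_⟩
  · rw [Fin.sum_univ_four]; fin_cases i <;> simp [md] <;> ring
  · rw [Fin.sum_univ_four]; fin_cases j <;> simp [md] <;> ring
  · rintro y ⟨i, hi, rfl⟩
    interval_cases i
    exacts [⟨0, 0, Or.inl rfl⟩, ⟨2, 1, Or.inr rfl⟩, ⟨2, 2, Or.inl rfl⟩, ⟨0, 3, Or.inr rfl⟩, ⟨1, 1, Or.inl rfl⟩, ⟨1, 0, Or.inr rfl⟩, ⟨2, 3, Or.inl rfl⟩, ⟨2, 0, Or.inr rfl⟩, ⟨0, 2, Or.inr rfl⟩, ⟨1, 2, Or.inr rfl⟩, ⟨1, 3, Or.inl rfl⟩, ⟨0, 1, Or.inl rfl⟩, ⟨3, 0, Or.inl rfl⟩, ⟨3, 3, Or.inr rfl⟩, ⟨3, 1, Or.inr rfl⟩, ⟨3, 2, Or.inl rfl⟩]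

theorem b46 (r : ℤ) : HA 4 6 (mid r 24) := by
  refine ⟨![![md r 0, md r 16, -(md r 14), -(md r 17), -(md r 7), md r 22],
    ![-(md r 3), -(md r 15), md r 5, md r 23, -(md r 19), md r 9],
    ![-(md r 8), -(md r 2), md r 13, md r 12, md r 6, -(md r 21)],
    ![md r 11, md r 1, -(md r 4), -(md r 18), md r 20, -(md r 10)]], fun i => ?_, fun j => ?_, ?_⟩
  · rw [Fin.sum_univ_six]; fin_cases i <;> simp [md] <;> ring
  · rw [Fin.sum_univ_four]; fin_cases j <;> simp [md] <;> ring
  · rintro y ⟨i, hi, rfl⟩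
    interval_cases i
    exacts [⟨0, 0, Or.inl rfl⟩, ⟨3, 1, Or.inl rfl⟩, ⟨2, 1, Or.inr rfl⟩, ⟨1, 0, Or.inr rfl⟩, ⟨3, 2, Or.inr rfl⟩, ⟨1, 2, Or.inl rfl⟩, ⟨2, 4, Or.inl rfl⟩, ⟨0, 4, Or.inr rfl⟩, ⟨2, 0, Or.inr rfl⟩, ⟨1, 5, Or.inl rfl⟩, ⟨3, 5, Or.inr rfl⟩, ⟨3, 0, Or.inl rfl⟩, ⟨2, 3, Or.inl rfl⟩, ⟨2, 2, Or.inl rfl⟩, ⟨0, 2, Or.inr rfl⟩, ⟨1, 1, Or.inr rfl⟩, ⟨0, 1, Or.inl rfl⟩, ⟨0, 3, Or.inr rfl⟩, ⟨3, 3, Or.inr rfl⟩, ⟨1, 4, Or.inr rfl⟩, ⟨3, 4, Or.inl rfl⟩, ⟨2, 5, Or.inr rfl⟩, ⟨0, 5, Or.inl rfl⟩, ⟨1, 3, Or.inl rfl⟩]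

theorem b66 (r : ℤ) : HA 6 6 (mid r 36) := by
  refine ⟨![![md r 30, md r 31, -(md r 24), md r 0, -(md r 33), -(md r 4)],
    ![-(md r 25), md r 23, md r 26, -(md r 32), md r 11, -(md r 3)],
    ![-(md r 5), -(md r 34), md r 15, md r 27, -(md r 22), md r 19],
    ![md r 8, -(md r 12), -(md r 9), md r 20, md r 28, -(md r 35)],
    ![-(md r 18), md r 21, -(md r 14), -(md r 13), md r 17, md r 7],
    ![md r 10, -(md r 29), md r 6, -(md r 2), -(md r 1), md r 16]], fun i => ?_, fun j => ?_, ?_⟩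
  · rw [Fin.sum_univ_six]; fin_cases i <;> simp [md] <;> ring
  · rw [Fin.sum_univ_six]; fin_cases j <;> simp [md] <;> ring
  · rintro y ⟨i, hi, rfl⟩
    interval_cases i
    exacts [⟨0, 3, Or.inl rfl⟩, ⟨5, 4, Or.inr rfl⟩, ⟨5, 3, Or.inr rfl⟩, ⟨1, 5, Or.inr rfl⟩, ⟨0, 5, Or.inr rfl⟩, ⟨2, 0, Or.inr rfl⟩, ⟨5, 2, Or.inl rfl⟩, ⟨4, 5, Or.inl rfl⟩, ⟨3, 0, Or.inl rfl⟩, ⟨3, 2, Or.inr rfl⟩, ⟨5, 0, Or.inl rfl⟩, ⟨1, 4, Or.inl rfl⟩, ⟨3, 1, Or.inr rfl⟩, ⟨4, 3, Or.inr rfl⟩, ⟨4, 2, Or.inr rfl⟩, ⟨2, 2, Or.inl rfl⟩, ⟨5, 5, Or.inl rfl⟩, ⟨4, 4, Or.inl rfl⟩, ⟨4, 0, Or.inr rfl⟩, ⟨2, 5, Or.inl rfl⟩, ⟨3, 3, Or.inl rfl⟩, ⟨4, 1, Or.inl rfl⟩, ⟨2, 4, Or.inr rfl⟩, ⟨1,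 1, Or.inl rfl⟩, ⟨0, 2, Or.inr rfl⟩, ⟨1, 0, Or.inr rfl⟩, ⟨1, 2, Or.inl rfl⟩, ⟨2, 3, Or.inl rfl⟩, ⟨3, 4, Or.inl rfl⟩, ⟨5, 1, Or.inr rfl⟩, ⟨0, 0, Or.inl rfl⟩, ⟨0, 1, Or.inl rfl⟩, ⟨1, 3, Or.inr rfl⟩, ⟨0, 4, Or.inr rfl⟩, ⟨2, 1, Or.inr rfl⟩, ⟨3, 5, Or.inr rfl⟩]

/-- special numbers -/
def sA : Set ℤ := {2, 4, 6, 8, 10, 12, 14, 16, 18, 20, 22, 24}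

theorem sA3  : HA 3 4 sA := by
  refine ⟨![![4, 2, 6, -(12)],
    ![20, -(18), 8, -(10)],
    ![-(24), 16, -(14), 22]], fun i => ?_, fun j => ?_, ?_⟩
  · rw [Fin.sum_univ_four]; fin_cases i <;> simp [md] <;> ring
  · rw [Fin.sum_univ_three]; fin_cases j <;> simp [md] <;> ring
  · rintro y (rfl | rfl | rfl | rfl | rfl | rfl | rfl | rfl | rfl | rfl | rfl | rfl)
    exacts [⟨0, 1, Or.inl rfl⟩, ⟨0, 0, Or.inl rfl⟩, ⟨0, 2, Or.inl rfl⟩, ⟨1, 2, Or.inl rfl⟩, ⟨1, 3, Or.inr rfl⟩, ⟨0, 3, Or.inr rfl⟩, ⟨2, 2, Or.inr rfl⟩, ⟨2, 1, Or.inl rfl⟩, ⟨1, 1, Or.inr rfl⟩, ⟨1, 0, Or.inl rfl⟩, ⟨2, 3, Or.inl rfl⟩, ⟨2, 0, Or.inr rfl⟩]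

theorem sA5 (r : ℤ) : HA 5 4 (sA ∪ mid r 8) := by
  refine ⟨![![24, -(20), -(16), 12],
    ![2, 8, -(4), -(6)],
    ![-(22), 14, 18, -(10)],
    ![md r 3, -(md r 7), -(md r 0), md r 4],
    ![-(md r 5), md r 6, md r 1, -(md r 2)]], fun i => ?_, fun j => ?_, ?_⟩
  · rw [Fin.sum_univ_four]; fin_cases i <;> simp [md] <;> ring
  · rw [Fin.sum_univ_five]; fin_cases j <;> simp [md] <;> ring
  · rintro y ((rfl | rfl | rfl | rfl | rfl | rfl | rfl | rfl | rfl | rfl | rfl | rfl) | ⟨i, hi, rfl⟩)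
    · exact ⟨1, 0, Or.inl rfl⟩
    · exact ⟨1, 2, Or.inr rfl⟩
    · exact ⟨1, 3, Or.inr rfl⟩
    · exact ⟨1, 1, Or.inl rfl⟩
    · exact ⟨2, 3, Or.inr rfl⟩
    · exact ⟨0, 3, Or.inl rfl⟩
    · exact ⟨2, 1, Or.inl rfl⟩
    · exact ⟨0, 2, Or.inr rfl⟩
    · exact ⟨2, 2, Or.inl rfl⟩
    · exact ⟨0, 1, Or.inr rfl⟩
    · exact ⟨2, 0, Or.inr rfl⟩
    · exact ⟨0, 0, Or.inl rfl⟩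
    · interval_cases i
      exacts [⟨3, 2, Or.inr rfl⟩, ⟨4, 2, Or.inl rfl⟩, ⟨4, 3, Or.inr rfl⟩, ⟨3, 0, Or.inl rfl⟩, ⟨3, 3, Or.inl rfl⟩, ⟨4, 0, Or.inr rfl⟩, ⟨4, 1, Or.inl rfl⟩, ⟨3, 1, Or.inr rfl⟩]

/-- special numbers -/
def sB (L : ℤ) : Set ℤ := {2, 6 + 4 * L, 10 + 4 * L, 14 + 8 * L, 1, 11 + 6 * L, 13 + 8 * L, 15 + 8 * L, 17 + 8 * L, 21 + 10 * L, 23 + 10 * L, 29 + 14 * L}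

theorem sB3 (L : ℤ) : HA 3 4 (sB L) := by
  refine ⟨![![6 + 4 * L, -(14 + 8 * L), -(2), 10 + 4 * L],
    ![23 + 10 * L, 13 + 8 * L, -(15 + 8 * L), -(21 + 10 * L)],
    ![-(29 + 14 * L), 1, 17 + 8 * L, 11 + 6 * L]], fun i => ?_, fun j => ?_, ?_⟩
  · rw [Fin.sum_univ_four]; fin_cases i <;> simp [md] <;> ring
  · rw [Fin.sum_univ_three]; fin_cases j <;> simp [md] <;> ring
  · rintro y (rfl | rfl | rfl | rfl | rfl | rfl | rfl | rfl | rfl | rfl | rfl | rfl)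
    exacts [⟨0, 2, Or.inr rfl⟩, ⟨0, 0, Or.inl rfl⟩, ⟨0, 3, Or.inl rfl⟩, ⟨0, 1, Or.inr rfl⟩, ⟨2, 1, Or.inl rfl⟩, ⟨2, 3, Or.inl rfl⟩, ⟨1, 1, Or.inl rfl⟩, ⟨1, 2, Or.inr rfl⟩, ⟨2, 2, Or.inl rfl⟩, ⟨1, 3, Or.inr rfl⟩, ⟨1, 0, Or.inl rfl⟩, ⟨2, 0, Or.inr rfl⟩]

theorem sB5 (L : ℤ) (r : ℤ) : HA 5 4 (sB L ∪ mid r 8) := by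
  refine ⟨![![23 + 10 * L, -(21 + 10 * L), 13 + 8 * L, -(15 + 8 * L)],
    ![-(10 + 4 * L), -(6 + 4 * L), 2, 14 + 8 * L],
    ![-(11 + 6 * L), 29 + 14 * L, -(17 + 8 * L), -(1)],
    ![md r 0, -(md r 3), md r 7, -(md r 4)],
    ![-(md r 1), md r 2, -(md r 6), md r 5]], fun i => ?_, fun j => ?_, ?_⟩
  · rw [Fin.sum_univ_four]; fin_cases i <;> simp [md] <;> ring
  · rw [Fin.sum_univ_five]; fin_cases j <;> simp [md] <;> ring
  · rintro y ((rfl | rfl | rfl | rfl | rfl | rfl | rfl | rfl | rfl | rfl | rfl | rfl) | ⟨i, hi, rfl⟩)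
    · exact ⟨1, 2, Or.inl rfl⟩
    · exact ⟨1, 1, Or.inr rfl⟩
    · exact ⟨1, 0, Or.inr rfl⟩
    · exact ⟨1, 3, Or.inl rfl⟩
    · exact ⟨2, 3, Or.inr rfl⟩
    · exact ⟨2, 0, Or.inr rfl⟩
    · exact ⟨0, 2, Or.inl rfl⟩
    · exact ⟨0, 3, Or.inr rfl⟩
    · exact ⟨2, 2, Or.inr rfl⟩
    · exact ⟨0, 1, Or.inr rfl⟩
    · exact ⟨0, 0, Or.inl rfl⟩
    · exact ⟨2, 1, Or.inl rfl⟩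
    · interval_cases i
      exacts [⟨3, 0, Or.inl rfl⟩, ⟨4, 0, Or.inr rfl⟩, ⟨4, 1, Or.inl rfl⟩, ⟨3, 1, Or.inr rfl⟩, ⟨3, 3, Or.inr rfl⟩, ⟨4, 3, Or.inl rfl⟩, ⟨4, 2, Or.inr rfl⟩, ⟨3, 2, Or.inl rfl⟩]

/-- special numbers -/
def sC (L : ℤ) : Set ℤ := {4 + 4 * L, 8 + 4 * L, 12 + 8 * L, 16 + 8 * L, 3 + 2 * L, 5 + 2 * L, 7 + 2 * L, 9 + 4 * L, 19 + 10 * L, 25 + 12 * L, 27 + 12 * L, 31 + 16 * L}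

theorem sC3 (L : ℤ) : HA 3 4 (sC L) := by
  refine ⟨![![4 + 4 * L, -(12 + 8 * L), 16 + 8 * L, -(8 + 4 * L)],
    ![27 + 12 * L, -(7 + 2 * L), -(25 + 12 * L), 5 + 2 * L],
    ![-(31 + 16 * L), 19 + 10 * L, 9 + 4 * L, 3 + 2 * L]], fun i => ?_, fun j => ?_, ?_⟩
  · rw [Fin.sum_univ_four]; fin_cases i <;> simp [md] <;> ring
  · rw [Fin.sum_univ_three]; fin_cases j <;> simp [md] <;> ring
  · rintro y (rfl | rfl | rfl | rfl | rfl | rfl | rfl | rfl | rfl | rfl | rfl | rfl)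
    exacts [⟨0, 0, Or.inl rfl⟩, ⟨0, 3, Or.inr rfl⟩, ⟨0, 1, Or.inr rfl⟩, ⟨0, 2, Or.inl rfl⟩, ⟨2, 3, Or.inl rfl⟩, ⟨1, 3, Or.inl rfl⟩, ⟨1, 1, Or.inr rfl⟩, ⟨2, 2, Or.inl rfl⟩, ⟨2, 1, Or.inl rfl⟩, ⟨1, 2, Or.inr rfl⟩, ⟨1, 0, Or.inl rfl⟩, ⟨2, 0, Or.inr rfl⟩]

theorem sC5 (L : ℤ) (r : ℤ) : HA 5 4 (sC L ∪ mid r 8) := by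
  refine ⟨![![12 + 8 * L, 8 + 4 * L, -(16 + 8 * L), -(4 + 4 * L)],
    ![-(25 + 12 * L), 27 + 12 * L, -(7 + 2 * L), 5 + 2 * L],
    ![9 + 4 * L, -(31 + 16 * L), 19 + 10 * L, 3 + 2 * L],
    ![-(md r 0), md r 4, -(md r 5), md r 1],
    ![md r 2, -(md r 6), md r 7, -(md r 3)]], fun i => ?_, fun j => ?_, ?_⟩
  · rw [Fin.sum_univ_four]; fin_cases i <;> simp [md] <;> ring
  · rw [Fin.sum_univ_five]; fin_cases j <;> simp [md] <;> ring
  · rintro y ((rfl | rfl | rfl | rfl | rfl | rfl | rfl | rfl | rfl | rfl | rfl | rfl) | ⟨i, hi, rfl⟩)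
    · exact ⟨0, 3, Or.inr rfl⟩
    · exact ⟨0, 1, Or.inl rfl⟩
    · exact ⟨0, 0, Or.inl rfl⟩
    · exact ⟨0, 2, Or.inr rfl⟩
    · exact ⟨2, 3, Or.inl rfl⟩
    · exact ⟨1, 3, Or.inl rfl⟩
    · exact ⟨1, 2, Or.inr rfl⟩
    · exact ⟨2, 0, Or.inl rfl⟩
    · exact ⟨2, 2, Or.inl rfl⟩
    · exact ⟨1, 0, Or.inr rfl⟩
    · exact ⟨1, 1, Or.inl rfl⟩
    · exact ⟨2, 1, Or.inr rfl⟩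
    · interval_cases i
      exacts [⟨3, 0, Or.inr rfl⟩, ⟨3, 3, Or.inl rfl⟩, ⟨4, 0, Or.inl rfl⟩, ⟨4, 3, Or.inr rfl⟩, ⟨3, 1, Or.inl rfl⟩, ⟨3, 2, Or.inr rfl⟩, ⟨4, 1, Or.inr rfl⟩, ⟨4, 2, Or.inl rfl⟩]

/-- special numbers -/
def sD : Set ℤ := {2, 4, 6, 8, 10, 12, 1, 3, 5, 7, 9, 11, 13, 15, 17, 19, 21, 23}

theorem sD3  : HA 3 6 sD := by
  refine ⟨![![6, -(13), 19, 2, -(3), -(11)],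
    ![17, -(8), -(15), 5, -(9), 10],
    ![-(23), 21, -(4), -(7), 12, 1]], fun i => ?_, fun j => ?_, ?_⟩
  · rw [Fin.sum_univ_six]; fin_cases i <;> simp [md] <;> ring
  · rw [Fin.sum_univ_three]; fin_cases j <;> simp [md] <;> ring
  · rintro y (rfl | rfl | rfl | rfl | rfl | rfl | rfl | rfl | rfl | rfl | rfl | rfl | rfl | rfl | rfl | rfl | rfl | rfl)
    exacts [⟨0, 3, Or.inl rfl⟩, ⟨2, 2, Or.inr rfl⟩, ⟨0, 0, Or.inl rfl⟩, ⟨1, 1, Or.inr rfl⟩, ⟨1, 5, Or.inl rfl⟩, ⟨2, 4, Or.inl rfl⟩, ⟨2, 5, Or.inl rfl⟩, ⟨0, 4, Or.inr rfl⟩, ⟨1, 3, Or.inl rfl⟩, ⟨2, 3, Or.inr rfl⟩, ⟨1, 4, Or.inr rfl⟩, ⟨0, 5, Or.inr rfl⟩, ⟨0, 1, Or.inr rfl⟩, ⟨1, 2, Or.inr rfl⟩, ⟨1, 0, Or.inl rfl⟩, ⟨0, 2, Or.inl rfl⟩, ⟨2, 1, Or.inl rfl⟩, ⟨2, 0, Or.inr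 rfl⟩]

theorem sD5 (r : ℤ) : HA 5 6 (sD ∪ mid r 12) := by
  refine ⟨![![8, -(13), -(md r 8), 2, -(1), md r 10],
    ![17, 21, -(19), -(5), md r 0, -(md r 7)],
    ![-(23), 12, 6, 15, -(md r 6), md r 1],
    ![md r 4, -(11), md r 11, -(md r 9), 3, -(md r 2)],
    ![-(md r 5), -(9), 7, md r 3, 10, -(4)]], fun i => ?_, fun j => ?_, ?_⟩
  · rw [Fin.sum_univ_six]; fin_cases i <;> simp [md] <;> ring
  · rw [Fin.sum_univ_five]; fin_cases j <;> simp [md] <;> ring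
  · rintro y ((rfl | rfl | rfl | rfl | rfl | rfl | rfl | rfl | rfl | rfl | rfl | rfl | rfl | rfl | rfl | rfl | rfl | rfl) | ⟨i, hi, rfl⟩)
    · exact ⟨0, 3, Or.inl rfl⟩
    · exact ⟨4, 5, Or.inr rfl⟩
    · exact ⟨2, 2, Or.inl rfl⟩
    · exact ⟨0, 0, Or.inl rfl⟩
    · exact ⟨4, 4, Or.inl rfl⟩
    · exact ⟨2, 1, Or.inl rfl⟩
    · exact ⟨0, 4, Or.inr rfl⟩
    · exact ⟨3, 4, Or.inl rfl⟩
    · exact ⟨1, 3, Or.inr rfl⟩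
    · exact ⟨4, 2, Or.inl rfl⟩
    · exact ⟨4, 1, Or.inr rfl⟩
    · exact ⟨3, 1, Or.inr rfl⟩
    · exact ⟨0, 1, Or.inr rfl⟩
    · exact ⟨2, 3, Or.inl rfl⟩
    · exact ⟨1, 0, Or.inl rfl⟩
    · exact ⟨1, 2, Or.inr rfl⟩
    · exact ⟨1, 1, Or.inl rfl⟩
    · exact ⟨2, 0, Or.inr rfl⟩
    · interval_cases i
      exacts [⟨1, 4, Or.inl rfl⟩, ⟨2, 5, Or.inl rfl⟩, ⟨3, 5, Or.inr rfl⟩, ⟨4, 3, Or.inl rfl⟩, ⟨3, 0, Or.inl rfl⟩, ⟨4, 0, Or.inr rfl⟩, ⟨2, 4, Or.inr rfl⟩, ⟨1, 5, Or.inr rfl⟩, ⟨0, 2, Or.inr rfl⟩, ⟨3, 3, Or.inr rfl⟩, ⟨0, 5, Or.inl rfl⟩, ⟨3, 2, Or.inl rfl⟩]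

/-- special numbers -/
def sE (L : ℤ) : Set ℤ := {2, 10 + 4 * L, 12 + 4 * L, 16 + 8 * L, 20 + 8 * L, 22 + 8 * L, 1, 3 + 2 * L, 5 + 2 * L, 7 + 2 * L, 9 + 4 * L, 13 + 6 * L, 17 + 8 * L, 19 + 8 * L, 25 + 10 * L, 27 + 12 * L, 29 + 12 * L, 33 + 14 * L}

theorem sE3 (L : ℤ) : HA 3 6 (sE L) := by
  refine ⟨![![2, -(1), 19 + 8 * L, 25 + 10 * L, -(12 + 4 * L), -(33 + 14 * L)],
    ![27 + 12 * L, -(16 + 8 * L), -(9 + 4 * L), -(22 + 8 * L), 7 + 2 * L, 13 + 6 * L],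
    ![-(29 + 12 * L), 17 + 8 * L, -(10 + 4 * L), -(3 + 2 * L), 5 + 2 * L, 20 + 8 * L]], fun i => ?_, fun j => ?_, ?_⟩
  · rw [Fin.sum_univ_six]; fin_cases i <;> simp [md] <;> ring
  · rw [Fin.sum_univ_three]; fin_cases j <;> simp [md] <;> ring
  · rintro y (rfl | rfl | rfl | rfl | rfl | rfl | rfl | rfl | rfl | rfl | rfl | rfl | rfl | rfl | rfl | rfl | rfl | rfl)
    exacts [⟨0, 0, Or.inl rfl⟩, ⟨2, 2, Or.inr rfl⟩, ⟨0, 4, Or.inr rfl⟩, ⟨1, 1, Or.inr rfl⟩, ⟨2, 5, Or.inl rfl⟩, ⟨1, 3, Or.inr rfl⟩, ⟨0, 1, Or.inr rfl⟩, ⟨2, 3, Or.inr rfl⟩, ⟨2, 4, Or.inl rfl⟩, ⟨1, 4, Or.inl rfl⟩, ⟨1, 2, Or.inr rfl⟩, ⟨1, 5, Or.inl rfl⟩, ⟨2, 1, Or.inl rfl⟩, ⟨0, 2, Or.inl rfl⟩, ⟨0, 3, Or.inl rfl⟩, ⟨1, 0, Or.inl rfl⟩, ⟨2, 0, Or.inr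 rfl⟩, ⟨0, 5, Or.inr rfl⟩]

theorem sE5 (L : ℤ) (r : ℤ) : HA 5 6 (sE L ∪ mid r 12) := by
  refine ⟨![![2, -(9 + 4 * L), -(29 + 12 * L), 16 + 8 * L, 33 + 14 * L, -(13 + 6 * L)],
    ![-(md r 0), 27 + 12 * L, md r 1, -(25 + 10 * L), 1, -(5 + 2 * L)],
    ![md r 4, -(md r 9), 12 + 4 * L, -(md r 3), -(10 + 4 * L), md r 7],
    ![md r 5, -(22 + 8 * L), -(md r 2), 3 + 2 * L, -(7 + 2 * L), 20 + 8 * L],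
    ![-(md r 10), md r 11, 19 + 8 * L, md r 6, -(17 + 8 * L), -(md r 8)]], fun i => ?_, fun j => ?_, ?_⟩
  · rw [Fin.sum_univ_six]; fin_cases i <;> simp [md] <;> ring
  · rw [Fin.sum_univ_five]; fin_cases j <;> simp [md] <;> ring
  · rintro y ((rfl | rfl | rfl | rfl | rfl | rfl | rfl | rfl | rfl | rfl | rfl | rfl | rfl | rfl | rfl | rfl | rfl | rfl) | ⟨i, hi, rfl⟩)
    · exact ⟨0, 0, Or.inl rfl⟩
    · exact ⟨2, 4, Or.inr rfl⟩
    · exact ⟨2, 2, Or.inl rfl⟩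
    · exact ⟨0, 3, Or.inl rfl⟩
    · exact ⟨3, 5, Or.inl rfl⟩
    · exact ⟨3, 1, Or.inr rfl⟩
    · exact ⟨1, 4, Or.inl rfl⟩
    · exact ⟨3, 3, Or.inl rfl⟩
    · exact ⟨1, 5, Or.inr rfl⟩
    · exact ⟨3, 4, Or.inr rfl⟩
    · exact ⟨0, 1, Or.inr rfl⟩
    · exact ⟨0, 5, Or.inr rfl⟩
    · exact ⟨4, 4, Or.inr rfl⟩
    · exact ⟨4, 2, Or.inl rfl⟩
    · exact ⟨1, 3, Or.inr rfl⟩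
    · exact ⟨1, 1, Or.inl rfl⟩
    · exact ⟨0, 2, Or.inr rfl⟩
    · exact ⟨0, 4, Or.inl rfl⟩
    · interval_cases i
      exacts [⟨1, 0, Or.inr rfl⟩, ⟨1, 2, Or.inl rfl⟩, ⟨3, 2, Or.inr rfl⟩, ⟨2, 3, Or.inr rfl⟩, ⟨2, 0, Or.inl rfl⟩, ⟨3, 0, Or.inl rfl⟩, ⟨4, 3, Or.inl rfl⟩, ⟨2, 5, Or.inl rfl⟩, ⟨4, 5, Or.inr rfl⟩, ⟨2, 1, Or.inr rfl⟩, ⟨4, 0, Or.inr rfl⟩, ⟨4, 1, Or.inl rfl⟩]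

/-- special numbers -/
def sF (L : ℤ) : Set ℤ := {4 + 4 * L, 6 + 4 * L, 8 + 4 * L, 14 + 4 * L, 18 + 8 * L, 24 + 8 * L, 11 + 6 * L, 15 + 6 * L, 21 + 10 * L, 23 + 10 * L, 31 + 14 * L, 35 + 14 * L}

theorem sF3 (L : ℤ) : HA 3 4 (sF L) := by
  refine ⟨![![4 + 4 * L, 15 + 6 * L, -(8 + 4 * L), -(11 + 6 * L)],
    ![14 + 4 * L, -(21 + 10 * L), 31 + 14 * L, -(24 + 8 * L)],
    ![-(18 + 8 * L), 6 + 4 * L, -(23 + 10 * L), 35 + 14 * L]], fun i => ?_, fun j => ?_, ?_⟩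
  · rw [Fin.sum_univ_four]; fin_cases i <;> simp [md] <;> ring
  · rw [Fin.sum_univ_three]; fin_cases j <;> simp [md] <;> ring
  · rintro y (rfl | rfl | rfl | rfl | rfl | rfl | rfl | rfl | rfl | rfl | rfl | rfl)
    exacts [⟨0, 0, Or.inl rfl⟩, ⟨2, 1, Or.inl rfl⟩, ⟨0, 2, Or.inr rfl⟩, ⟨1, 0, Or.inl rfl⟩, ⟨2, 0, Or.inr rfl⟩, ⟨1, 3, Or.inr rfl⟩, ⟨0, 3, Or.inr rfl⟩, ⟨0, 1, Or.inl rfl⟩, ⟨1, 1, Or.inr rfl⟩, ⟨2, 2, Or.inr rfl⟩, ⟨1, 2, Or.inl rfl⟩, ⟨2, 3, Or.inl rfl⟩]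

theorem sF5 (L : ℤ) (r : ℤ) : HA 5 4 (sF L ∪ mid r 8) := by
  refine ⟨![![8 + 4 * L, -(15 + 6 * L), 11 + 6 * L, -(4 + 4 * L)],
    ![14 + 4 * L, -(24 + 8 * L), -(21 + 10 * L), 31 + 14 * L],
    ![-(18 + 8 * L), 35 + 14 * L, 6 + 4 * L, -(23 + 10 * L)],
    ![md r 0, -(md r 4), -(md r 1), md r 5],
    ![-(md r 2), md r 6, md r 3, -(md r 7)]], fun i => ?_, fun j => ?_, ?_⟩
  · rw [Fin.sum_univ_four]; fin_cases i <;> simp [md] <;> ring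
  · rw [Fin.sum_univ_five]; fin_cases j <;> simp [md] <;> ring
  · rintro y ((rfl | rfl | rfl | rfl | rfl | rfl | rfl | rfl | rfl | rfl | rfl | rfl) | ⟨i, hi, rfl⟩)
    · exact ⟨0, 3, Or.inr rfl⟩
    · exact ⟨2, 2, Or.inl rfl⟩
    · exact ⟨0, 0, Or.inl rfl⟩
    · exact ⟨1, 0, Or.inl rfl⟩
    · exact ⟨2, 0, Or.inr rfl⟩
    · exact ⟨1, 1, Or.inr rfl⟩
    · exact ⟨0, 2, Or.inl rfl⟩
    · exact ⟨0, 1, Or.inr rfl⟩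
    · exact ⟨1, 2, Or.inr rfl⟩
    · exact ⟨2, 3, Or.inr rfl⟩
    · exact ⟨1, 3, Or.inl rfl⟩
    · exact ⟨2, 1, Or.inl rfl⟩
    · interval_cases i
      exacts [⟨3, 0, Or.inl rfl⟩, ⟨3, 2, Or.inr rfl⟩, ⟨4, 0, Or.inr rfl⟩, ⟨4, 2, Or.inl rfl⟩, ⟨3, 1, Or.inr rfl⟩, ⟨3, 3, Or.inl rfl⟩, ⟨4, 1, Or.inl rfl⟩, ⟨4, 3, Or.inr rfl⟩]

/-- special numbers -/
def sG : Set ℤ := {2, 4, 6, 8, 10, 1, 3, 5, 7}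

theorem sG3  : HA 3 3 sG := by
  refine ⟨![![2, -(5), 3],
    ![6, 4, -(10)],
    ![-(8), 1, 7]], fun i => ?_, fun j => ?_, ?_⟩
  · rw [Fin.sum_univ_three]; fin_cases i <;> simp [md] <;> ring
  · rw [Fin.sum_univ_three]; fin_cases j <;> simp [md] <;> ring
  · rintro y (rfl | rfl | rfl | rfl | rfl | rfl | rfl | rfl | rfl)
    exacts [⟨0, 0, Or.inl rfl⟩, ⟨1, 1, Or.inl rfl⟩, ⟨1, 0, Or.inl rfl⟩, ⟨2, 0, Or.inr rfl⟩, ⟨1, 2, Or.inr rfl⟩, ⟨2, 1, Or.inl rfl⟩, ⟨0, 2, Or.inl rfl⟩, ⟨0, 1, Or.inr rfl⟩, ⟨2, 2, Or.inl rfl⟩]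

theorem sG35 (r : ℤ) : HA 3 5 (sG ∪ mid r 6) := by
  refine ⟨![![10, 6, -(8), md r 0, -(md r 4)],
    ![-(3), -(5), -(md r 1), 4, md r 3],
    ![-(7), -(1), md r 5, -(md r 2), 2]], fun i => ?_, fun j => ?_, ?_⟩
  · rw [Fin.sum_univ_five]; fin_cases i <;> simp [md] <;> ring
  · rw [Fin.sum_univ_three]; fin_cases j <;> simp [md] <;> ring
  · rintro y ((rfl | rfl | rfl | rfl | rfl | rfl | rfl | rfl | rfl) | ⟨i, hi, rfl⟩)
    · exact ⟨2, 4, Or.inl rfl⟩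
    · exact ⟨1, 3, Or.inl rfl⟩
    · exact ⟨0, 1, Or.inl rfl⟩
    · exact ⟨0, 2, Or.inr rfl⟩
    · exact ⟨0, 0, Or.inl rfl⟩
    · exact ⟨2, 1, Or.inr rfl⟩
    · exact ⟨1, 0, Or.inr rfl⟩
    · exact ⟨1, 1, Or.inr rfl⟩
    · exact ⟨2, 0, Or.inr rfl⟩
    · interval_cases i
      exacts [⟨0, 3, Or.inl rfl⟩, ⟨1, 2, Or.inr rfl⟩, ⟨2, 3, Or.inr rfl⟩, ⟨1, 4, Or.inl rfl⟩, ⟨0, 4, Or.inr rfl⟩, ⟨2, 2, Or.inl rfl⟩]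

theorem sG5 (r : ℤ) : HA 5 5 (sG ∪ mid r 16) := by
  refine ⟨![![10, md r 7, -(md r 15), -(md r 8), md r 11],
    ![-(md r 0), md r 1, 2, -(7), 3],
    ![md r 3, 8, -(md r 4), -(1), -(5)],
    ![md r 6, -(md r 2), md r 5, 6, -(md r 12)],
    ![-(md r 14), -(md r 10), md r 13, md r 9, 4]], fun i => ?_, fun j => ?_, ?_⟩
  · rw [Fin.sum_univ_five]; fin_cases i <;> simp [md] <;> ring
  · rw [Fin.sum_univ_five]; fin_cases j <;> simp [md] <;> ring
  · rintro y ((rfl | rfl | rfl | rfl | rfl | rfl | rfl | rfl | rfl) | ⟨i, hi, rfl⟩)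
    · exact ⟨1, 2, Or.inl rfl⟩
    · exact ⟨4, 4, Or.inl rfl⟩
    · exact ⟨3, 3, Or.inl rfl⟩
    · exact ⟨2, 1, Or.inl rfl⟩
    · exact ⟨0, 0, Or.inl rfl⟩
    · exact ⟨2, 3, Or.inr rfl⟩
    · exact ⟨1, 4, Or.inl rfl⟩
    · exact ⟨2, 4, Or.inr rfl⟩
    · exact ⟨1, 3, Or.inr rfl⟩
    · interval_cases i
      exacts [⟨1, 0, Or.inr rfl⟩, ⟨1, 1, Or.inl rfl⟩, ⟨3, 1, Or.inr rfl⟩, ⟨2, 0, Or.inl rfl⟩, ⟨2, 2, Or.inr rfl⟩, ⟨3, 2, Or.inl rfl⟩, ⟨3, 0, Or.inl rfl⟩, ⟨0, 1, Or.inl rfl⟩, ⟨0, 3, Or.inr rfl⟩, ⟨4, 3, Or.inl rfl⟩, ⟨4, 1, Or.inr rfl⟩, ⟨0, 4, Or.inl rfl⟩, ⟨3, 4, Or.inr rfl⟩, ⟨4, 2, Or.inl rfl⟩, ⟨4, 0, Or.inr rfl⟩, ⟨0, 2, Or.inr rfl⟩]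

/-- special numbers -/
def sH (L : ℤ) : Set ℤ := {2, 4, 14 + 8 * L, 16 + 8 * L, 18 + 8 * L, 5 + 4 * L, 17 + 12 * L, 19 + 12 * L, 21 + 12 * L}

theorem sH3 (L : ℤ) : HA 3 3 (sH L) := by
  refine ⟨![![4, -(21 + 12 * L), 17 + 12 * L],
    ![14 + 8 * L, 5 + 4 * L, -(19 + 12 * L)],
    ![-(18 + 8 * L), 16 + 8 * L, 2]], fun i => ?_, fun j => ?_, ?_⟩
  · rw [Fin.sum_univ_three]; fin_cases i <;> simp [md] <;> ring
  · rw [Fin.sum_univ_three]; fin_cases j <;> simp [md] <;> ring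
  · rintro y (rfl | rfl | rfl | rfl | rfl | rfl | rfl | rfl | rfl)
    exacts [⟨2, 2, Or.inl rfl⟩, ⟨0, 0, Or.inl rfl⟩, ⟨1, 0, Or.inl rfl⟩, ⟨2, 1, Or.inl rfl⟩, ⟨2, 0, Or.inr rfl⟩, ⟨1, 1, Or.inl rfl⟩, ⟨0, 2, Or.inl rfl⟩, ⟨1, 2, Or.inr rfl⟩, ⟨0, 1, Or.inr rfl⟩]

/-- special numbers -/
def sI (L : ℤ) : Set ℤ := {6 + 4 * L, 8 + 4 * L, 10 + 8 * L, 12 + 8 * L, 1, 3 + 2 * L, 7 + 4 * L, 9 + 6 * L, 11 + 8 * L, 13 + 8 * L, 15 + 10 * L, 23 + 14 * L}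

theorem sI3 (L : ℤ) : HA 3 4 (sI L) := by
  refine ⟨![![8 + 4 * L, -(12 + 8 * L), 10 + 8 * L, -(6 + 4 * L)],
    ![15 + 10 * L, 3 + 2 * L, -(11 + 8 * L), -(7 + 4 * L)],
    ![-(23 + 14 * L), 9 + 6 * L, 1, 13 + 8 * L]], fun i => ?_, fun j => ?_, ?_⟩
  · rw [Fin.sum_univ_four]; fin_cases i <;> simp [md] <;> ring
  · rw [Fin.sum_univ_three]; fin_cases j <;> simp [md] <;> ring
  · rintro y (rfl | rfl | rfl | rfl | rfl | rfl | rfl | rfl | rfl | rfl | rfl | rfl)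
    exacts [⟨0, 3, Or.inr rfl⟩, ⟨0, 0, Or.inl rfl⟩, ⟨0, 2, Or.inl rfl⟩, ⟨0, 1, Or.inr rfl⟩, ⟨2, 2, Or.inl rfl⟩, ⟨1, 1, Or.inl rfl⟩, ⟨1, 3, Or.inr rfl⟩, ⟨2, 1, Or.inl rfl⟩, ⟨1, 2, Or.inr rfl⟩, ⟨2, 3, Or.inl rfl⟩, ⟨1, 0, Or.inl rfl⟩, ⟨2, 0, Or.inr rfl⟩]

/-- special numbers -/
def sJ (L : ℤ) : Set ℤ := {6 + 4 * L, 8 + 4 * L, 10 + 4 * L, 12 + 4 * L, 16 + 8 * L, 18 + 8 * L, 22 + 8 * L, 1, 7 + 2 * L, 9 + 4 * L, 11 + 4 * L, 13 + 6 * L, 15 + 6 * L, 21 + 10 * L, 25 + 12 * L}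

theorem sJ3 (L : ℤ) : HA 3 5 (sJ L) := by
  refine ⟨![![22 + 8 * L, -(8 + 4 * L), 9 + 4 * L, -(12 + 4 * L), -(11 + 4 * L)],
    ![-(7 + 2 * L), -(13 + 6 * L), 16 + 8 * L, -(6 + 4 * L), 10 + 4 * L],
    ![-(15 + 6 * L), 21 + 10 * L, -(25 + 12 * L), 18 + 8 * L, 1]], fun i => ?_, fun j => ?_, ?_⟩
  · rw [Fin.sum_univ_five]; fin_cases i <;> simp [md] <;> ring
  · rw [Fin.sum_univ_three]; fin_cases j <;> simp [md] <;> ring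
  · rintro y (rfl | rfl | rfl | rfl | rfl | rfl | rfl | rfl | rfl | rfl | rfl | rfl | rfl | rfl | rfl)
    exacts [⟨1, 3, Or.inr rfl⟩, ⟨0, 1, Or.inr rfl⟩, ⟨1, 4, Or.inl rfl⟩, ⟨0, 3, Or.inr rfl⟩, ⟨1, 2, Or.inl rfl⟩, ⟨2, 3, Or.inl rfl⟩, ⟨0, 0, Or.inl rfl⟩, ⟨2, 4, Or.inl rfl⟩, ⟨1, 0, Or.inr rfl⟩, ⟨0, 2, Or.inl rfl⟩, ⟨0, 4, Or.inr rfl⟩, ⟨1, 1, Or.inr rfl⟩, ⟨2, 0, Or.inr rfl⟩, ⟨2, 1, Or.inl rfl⟩, ⟨2, 2, Or.inr rfl⟩]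

theorem sJ5 (L : ℤ) (r : ℤ) : HA 5 5 (sJ L ∪ mid r 10) := by
  refine ⟨![![8 + 4 * L, -(md r 4), -(9 + 4 * L), md r 5, -(1)],
    ![6 + 4 * L, 12 + 4 * L, -(22 + 8 * L), -(md r 7), md r 9],
    ![-(18 + 8 * L), 15 + 6 * L, md r 6, 7 + 2 * L, -(md r 8)],
    ![-(md r 0), md r 1, 25 + 12 * L, -(16 + 8 * L), -(11 + 4 * L)],
    ![md r 2, -(21 + 10 * L), -(md r 3), 13 + 6 * L, 10 + 4 * L]], fun i => ?_, fun j => ?_, ?_⟩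
  · rw [Fin.sum_univ_five]; fin_cases i <;> simp [md] <;> ring
  · rw [Fin.sum_univ_five]; fin_cases j <;> simp [md] <;> ring
  · rintro y ((rfl | rfl | rfl | rfl | rfl | rfl | rfl | rfl | rfl | rfl | rfl | rfl | rfl | rfl | rfl) | ⟨i, hi, rfl⟩)
    · exact ⟨1, 0, Or.inl rfl⟩
    · exact ⟨0, 0, Or.inl rfl⟩
    · exact ⟨4, 4, Or.inl rfl⟩
    · exact ⟨1, 1, Or.inl rfl⟩
    · exact ⟨3, 3, Or.inr rfl⟩
    · exact ⟨2, 0, Or.inr rfl⟩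
    · exact ⟨1, 2, Or.inr rfl⟩
    · exact ⟨0, 4, Or.inr rfl⟩
    · exact ⟨2, 3, Or.inl rfl⟩
    · exact ⟨0, 2, Or.inr rfl⟩
    · exact ⟨3, 4, Or.inr rfl⟩
    · exact ⟨4, 3, Or.inl rfl⟩
    · exact ⟨2, 1, Or.inl rfl⟩
    · exact ⟨4, 1, Or.inr rfl⟩
    · exact ⟨3, 2, Or.inl rfl⟩
    · interval_cases i
      exacts [⟨3, 0, Or.inr rfl⟩, ⟨3, 1, Or.inl rfl⟩, ⟨4, 0, Or.inl rfl⟩, ⟨4, 2, Or.inr rfl⟩, ⟨0, 1, Or.inr rfl⟩, ⟨0, 3, Or.inl rfl⟩, ⟨2, 2, Or.inl rfl⟩, ⟨1, 3, Or.inr rfl⟩, ⟨2, 4, Or.inr rfl⟩, ⟨1, 4, Or.inl rfl⟩]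

/-- special numbers -/
def sK (L : ℤ) : Set ℤ := {2, 4, 14 + 8 * L, 20 + 8 * L, 3, 5 + 2 * L, 17 + 8 * L, 19 + 10 * L, 23 + 12 * L, 27 + 12 * L, 29 + 14 * L, 31 + 14 * L}

theorem sK3 (L : ℤ) : HA 3 4 (sK L) := by
  refine ⟨![![14 + 8 * L, 2, -(20 + 8 * L), 4],
    ![5 + 2 * L, -(31 + 14 * L), 3, 23 + 12 * L],
    ![-(19 + 10 * L), 29 + 14 * L, 17 + 8 * L, -(27 + 12 * L)]], fun i => ?_, fun j => ?_, ?_⟩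
  · rw [Fin.sum_univ_four]; fin_cases i <;> simp [md] <;> ring
  · rw [Fin.sum_univ_three]; fin_cases j <;> simp [md] <;> ring
  · rintro y (rfl | rfl | rfl | rfl | rfl | rfl | rfl | rfl | rfl | rfl | rfl | rfl)
    exacts [⟨0, 1, Or.inl rfl⟩, ⟨0, 3, Or.inl rfl⟩, ⟨0, 0, Or.inl rfl⟩, ⟨0, 2, Or.inr rfl⟩, ⟨1, 2, Or.inl rfl⟩, ⟨1, 0, Or.inl rfl⟩, ⟨2, 2, Or.inl rfl⟩, ⟨2, 0, Or.inr rfl⟩, ⟨1, 3, Or.inl rfl⟩, ⟨2, 3, Or.inr rfl⟩, ⟨2, 1, Or.inl rfl⟩, ⟨1, 1, Or.inr rfl⟩]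

theorem sK5 (L : ℤ) (r : ℤ) : HA 5 4 (sK L ∪ mid r 8) := by
  refine ⟨![![5 + 2 * L, 3, 23 + 12 * L, -(31 + 14 * L)],
    ![20 + 8 * L, -(14 + 8 * L), -(md r 3), md r 0],
    ![-(19 + 10 * L), 17 + 8 * L, -(27 + 12 * L), 29 + 14 * L],
    ![md r 4, -(md r 5), -(2), 4],
    ![-(md r 7), md r 2, md r 6, -(md r 1)]], fun i => ?_, fun j => ?_, ?_⟩
  · rw [Fin.sum_univ_four]; fin_cases i <;> simp [md] <;> ring
  · rw [Fin.sum_univ_five]; fin_cases j <;> simp [md] <;> ring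
  · rintro y ((rfl | rfl | rfl | rfl | rfl | rfl | rfl | rfl | rfl | rfl | rfl | rfl) | ⟨i, hi, rfl⟩)
    · exact ⟨3, 2, Or.inr rfl⟩
    · exact ⟨3, 3, Or.inl rfl⟩
    · exact ⟨1, 1, Or.inr rfl⟩
    · exact ⟨1, 0, Or.inl rfl⟩
    · exact ⟨0, 1, Or.inl rfl⟩
    · exact ⟨0, 0, Or.inl rfl⟩
    · exact ⟨2, 1, Or.inl rfl⟩
    · exact ⟨2, 0, Or.inr rfl⟩
    · exact ⟨0, 2, Or.inl rfl⟩
    · exact ⟨2, 2, Or.inr rfl⟩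
    · exact ⟨2, 3, Or.inl rfl⟩
    · exact ⟨0, 3, Or.inr rfl⟩
    · interval_cases i
      exacts [⟨1, 3, Or.inl rfl⟩, ⟨4, 3, Or.inr rfl⟩, ⟨4, 1, Or.inl rfl⟩, ⟨1, 2, Or.inr rfl⟩, ⟨3, 0, Or.inl rfl⟩, ⟨3, 1, Or.inr rfl⟩, ⟨4, 2, Or.inl rfl⟩, ⟨4, 0, Or.inr rfl⟩]

/-- A generic group. -/
def BG (b a₁ a₂ b' a₃ : ℤ) : Set ℤ :=
  {b, b + 2, b', b' + 2, a₁, a₂, a₃, a₂ + a₃ - a₁,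
    a₁ + b, a₂ + b + 2, a₃ + b', a₂ + a₃ - a₁ + b' + 2}

theorem BG3 (b a₁ a₂ b' a₃ : ℤ) : HA 3 4 (BG b a₁ a₂ b' a₃) := by
  refine ⟨![![b, -(b + 2), -b', b' + 2], ![a₁, -a₂, -a₃, a₂ + a₃ - a₁],
    ![-(a₁ + b), a₂ + b + 2, a₃ + b', -(a₂ + a₃ - a₁ + b' + 2)]],
    fun i => ?_, fun j => ?_, ?_⟩
  · rw [Fin.sum_univ_four]; fin_cases i <;> simp <;> ring
  · rw [Fin.sum_univ_three]; fin_cases j <;> simp <;> ring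
  · rintro y (rfl | rfl | rfl | rfl | rfl | rfl | rfl | rfl | rfl | rfl | rfl | rfl)
    exacts [⟨0, 0, Or.inl rfl⟩, ⟨0, 1, Or.inr rfl⟩, ⟨0, 2, Or.inr rfl⟩, ⟨0, 3, Or.inl rfl⟩,
      ⟨1, 0, Or.inl rfl⟩, ⟨1, 1, Or.inr rfl⟩, ⟨1, 2, Or.inr rfl⟩, ⟨1, 3, Or.inl rfl⟩,
      ⟨2, 0, Or.inr rfl⟩, ⟨2, 1, Or.inl rfl⟩, ⟨2, 2, Or.inl rfl⟩, ⟨2, 3, Or.inr rfl⟩]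

theorem BG5 (b a₁ a₂ b' a₃ r : ℤ) : HA 5 4 (BG b a₁ a₂ b' a₃ ∪ mid r 8) := by
  refine ⟨![![b + 2, -b, -(b' + 2), b'], ![a₁, -a₂, -a₃, a₂ + a₃ - a₁],
    ![-(a₁ + b), a₂ + b + 2, a₃ + b', -(a₂ + a₃ - a₁ + b' + 2)],
    ![md r 0, -md r 3, -md r 4, md r 7], ![-md r 1, md r 2, md r 5, -md r 6]],
    fun i => ?_, fun j => ?_, ?_⟩
  · rw [Fin.sum_univ_four]; fin_cases i <;> simp [md] <;> ring
  · rw [Fin.sum_univ_five]; fin_cases j <;> simp [md] <;> ring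
  · rintro y ((rfl | rfl | rfl | rfl | rfl | rfl | rfl | rfl | rfl | rfl | rfl | rfl) | ⟨i, hi, rfl⟩)
    on_goal 13 =>
      interval_cases i
      exacts [⟨3, 0, Or.inl rfl⟩, ⟨4, 0, Or.inr rfl⟩, ⟨4, 1, Or.inl rfl⟩, ⟨3, 1, Or.inr rfl⟩,
        ⟨3, 2, Or.inr rfl⟩, ⟨4, 2, Or.inl rfl⟩, ⟨4, 3, Or.inr rfl⟩, ⟨3, 3, Or.inl rfl⟩]
    exacts [⟨0, 1, Or.inr rfl⟩, ⟨0, 0, Or.inl rfl⟩, ⟨0, 3, Or.inl rfl⟩, ⟨0, 2, Or.inr rfl⟩,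
      ⟨1, 0, Or.inl rfl⟩, ⟨1, 1, Or.inr rfl⟩, ⟨1, 2, Or.inr rfl⟩, ⟨1, 3, Or.inl rfl⟩,
      ⟨2, 0, Or.inr rfl⟩, ⟨2, 1, Or.inl rfl⟩, ⟨2, 2, Or.inl rfl⟩, ⟨2, 3, Or.inr rfl⟩]

/-- The `i`-th group of the bulk. -/
def bulk (k y w p q L i : ℕ) : Set ℤ :=
  BG (2 * (k + 1) + 4 * i) (2 * (p + 2 * L + y - 1 - i) + 1)
    (2 * (p + 6 * L + k + (y + w) + q + y - 1 - i) + 1)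
    (2 * (k + (y + w) + 2 * L + 1) + 4 * i) (2 * (p + L - 1 - i) + 1)

theorem bulkG (k y w p q L i : ℕ) : GG (bulk k y w p q L i) :=
  ⟨BG3 _ _ _ _ _, BG5 _ _ _ _ _⟩

theorem bulk_even (k y w p q e L j : ℕ) (hj : j < k + 4 * L + (y + w) + e) :
    (∃ i < L, md 1 j ∈ bulk k y w p q L i) ∨ (∃ t < k, j = t) ∨
    (∃ t < y + w, j = k + 2 * L + t) ∨ (∃ t < e, j = k + 4 * L + (y + w) + t) := by
  by_cases h1 : j < k
  · exact Or.inr (Or.inl ⟨j, h1, rfl⟩)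
  by_cases h2 : j < k + 2 * L
  · left
    refine ⟨(j - k) / 2, by omega, ?_⟩
    simp only [bulk, BG, md, Set.mem_insert_iff]
    rcases Nat.mod_two_eq_zero_or_one (j - k) with h | h
    · left; omega
    · right; left; omega
  by_cases h3 : j < k + 2 * L + (y + w)
  · exact Or.inr (Or.inr (Or.inl ⟨j - (k + 2 * L), by omega, by omega⟩))
  by_cases h4 : j < k + 4 * L + (y + w)
  · left
    refine ⟨(j - (k + 2 * L + (y + w))) / 2, by omega, ?_⟩
    simp only [bulk, BG, md, Set.mem_insert_iff]
    rcases Nat.mod_two_eq_zero_or_one (j - (k + 2 * L + (y + w))) with h | h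
    · right; right; left; omega
    · right; right; right; left; omega
  · exact Or.inr (Or.inr (Or.inr ⟨j - (k + 4 * L + (y + w)), by omega, by omega⟩))

theorem bulk_odd (k y w p q e L j : ℕ) (hj : j < p + 8 * L + 2 * k + 2 * (y + w) + q + 1 + e) :
    (∃ i < L, 2 * (j : ℤ) + 1 ∈ bulk k y w p q L i) ∨ (∃ t < p, j = t) ∨
    (∃ t < y, j = p + L + t) ∨ (∃ t < k, j = p + 2 * L + y + t) ∨
    (∃ t < w, j = p + 3 * L + y + k + t) ∨ (∃ t < q, j = p + 4 * L + k + y + w + t) ∨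
    (∃ t < y, j = p + 5 * L + k + y + w + q + t) ∨
    (∃ t < k + 1, j = p + 6 * L + k + y + w + q + y + t) ∨
    (∃ t < w, j = p + 7 * L + 2 * k + 1 + y + w + q + y + t) ∨
    (∃ t < e, j = p + 8 * L + 2 * k + 2 * (y + w) + q + 1 + t) := by
  by_cases h1 : j < p
  · exact Or.inr (Or.inl ⟨j, h1, rfl⟩)
  by_cases h2 : j < p + L
  · left
    refine ⟨p + L - 1 - j, by omega, ?_⟩
    simp only [bulk, BG, Set.mem_insert_iff]
    iterate 6 right
    left; omega
  by_cases h3 : j < p + L + y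
  · exact Or.inr (Or.inr (Or.inl ⟨j - (p + L), by omega, by omega⟩))
  by_cases h4 : j < p + 2 * L + y
  · left
    refine ⟨p + 2 * L + y - 1 - j, by omega, ?_⟩
    simp only [bulk, BG, Set.mem_insert_iff]
    iterate 4 right
    left; omega
  by_cases h5 : j < p + 2 * L + y + k
  · exact Or.inr (Or.inr (Or.inr (Or.inl ⟨j - (p + 2 * L + y), by omega, by omega⟩)))
  by_cases h6 : j < p + 3 * L + y + k
  · left
    refine ⟨j - (p + 2 * L + y + k), by omega, ?_⟩
    simp only [bulk, BG, Set.mem_insert_iff]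
    iterate 8 right
    left; omega
  by_cases h7 : j < p + 3 * L + y + k + w
  · exact Or.inr (Or.inr (Or.inr (Or.inr (Or.inl
      ⟨j - (p + 3 * L + y + k), by omega, by omega⟩))))
  by_cases h8 : j < p + 4 * L + y + k + w
  · left
    refine ⟨j - (p + 3 * L + y + k + w), by omega, ?_⟩
    simp only [bulk, BG, Set.mem_insert_iff]
    iterate 10 right
    left; omega
  by_cases h9 : j < p + 4 * L + y + k + w + q
  · exact Or.inr (Or.inr (Or.inr (Or.inr (Or.inr (Or.inl
      ⟨j - (p + 4 * L + y + k + w), by omega, by omega⟩)))))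
  by_cases h10 : j < p + 5 * L + y + k + w + q
  · left
    refine ⟨p + 5 * L + y + k + w + q - 1 - j, by omega, ?_⟩
    simp only [bulk, BG, Set.mem_insert_iff]
    iterate 7 right
    left; omega
  by_cases h11 : j < p + 5 * L + y + k + w + q + y
  · exact Or.inr (Or.inr (Or.inr (Or.inr (Or.inr (Or.inr (Or.inl
      ⟨j - (p + 5 * L + y + k + w + q), by omega, by omega⟩))))))
  by_cases h12 : j < p + 6 * L + y + k + w + q + y
  · left
    refine ⟨p + 6 * L + y + k + w + q + y - 1 - j, by omega, ?_⟩
    simp only [bulk, BG, Set.mem_insert_iff]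
    iterate 5 right
    left; omega
  by_cases h13 : j < p + 6 * L + y + k + w + q + y + (k + 1)
  · exact Or.inr (Or.inr (Or.inr (Or.inr (Or.inr (Or.inr (Or.inr (Or.inl
      ⟨j - (p + 6 * L + y + k + w + q + y), by omega, by omega⟩)))))))
  by_cases h14 : j < p + 7 * L + y + k + w + q + y + (k + 1)
  · left
    refine ⟨j - (p + 6 * L + y + k + w + q + y + (k + 1)), by omega, ?_⟩
    simp only [bulk, BG, Set.mem_insert_iff]
    iterate 9 right
    left; omega
  by_cases h15 : j < p + 7 * L + y + k + w + q + y + (k + 1) + w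
  · exact Or.inr (Or.inr (Or.inr (Or.inr (Or.inr (Or.inr (Or.inr (Or.inr (Or.inl
      ⟨j - (p + 7 * L + y + k + w + q + y + (k + 1)), by omega, by omega⟩))))))))
  by_cases h16 : j < p + 8 * L + y + k + w + q + y + (k + 1) + w
  · left
    refine ⟨j - (p + 7 * L + y + k + w + q + y + (k + 1) + w), by omega, ?_⟩
    simp only [bulk, BG, Set.mem_insert_iff, Set.mem_singleton_iff]
    iterate 11 right
    omega
  · exact Or.inr (Or.inr (Or.inr (Or.inr (Or.inr (Or.inr (Or.inr (Or.inr (Or.inr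
      ⟨j - (p + 8 * L + 2 * k + 2 * (y + w) + q + 1), by omega, by omega⟩))))))))

/-- Everything covered by the bulk and a set of special numbers. -/
theorem bulk_cover (k y w p q e₀ e₃ L : ℕ) (X : Set ℤ)
    (hb : ∀ i < L, bulk k y w p q L i ⊆ X)
    (c1 : ∀ t < k, (2 * (1 + t) : ℤ) ∈ X)
    (c2 : ∀ t < y + w, (2 * (1 + k + t) + 4 * L : ℤ) ∈ X)
    (c3 : ∀ t < e₀, (2 * (1 + k + (y + w) + t) + 8 * L : ℤ) ∈ X)
    (d1 : ∀ t < p, (2 * t + 1 : ℤ) ∈ X)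
    (d2 : ∀ t < y, (2 * (p + t) + 1 + 2 * L : ℤ) ∈ X)
    (d3 : ∀ t < k, (2 * (p + y + t) + 1 + 4 * L : ℤ) ∈ X)
    (d4 : ∀ t < w, (2 * (p + y + k + t) + 1 + 6 * L : ℤ) ∈ X)
    (d5 : ∀ t < q, (2 * (p + y + k + w + t) + 1 + 8 * L : ℤ) ∈ X)
    (d6 : ∀ t < y, (2 * (p + y + k + w + q + t) + 1 + 10 * L : ℤ) ∈ X)
    (d7 : ∀ t < k + 1, (2 * (p + y + k + w + q + y + t) + 1 + 12 * L : ℤ) ∈ X)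
    (d8 : ∀ t < w, (2 * (p + y + k + w + q + y + (k + 1) + t) + 1 + 14 * L : ℤ) ∈ X)
    (d9 : ∀ t < e₃, (2 * (p + y + k + w + q + y + (k + 1) + w + t) + 1 + 16 * L : ℤ) ∈ X) :
    mid 1 (k + 4 * L + (y + w) + e₀) ∪ odl (p + 8 * L + 2 * k + 2 * (y + w) + q + 1 + e₃) ⊆ X := by
  rintro z (⟨j, hj, rfl⟩ | ⟨j, hj, rfl⟩)
  · rcases bulk_even k y w p q e₀ L j hj with
      ⟨i, hi, h⟩ | ⟨t, ht, rfl⟩ | ⟨t, ht, rfl⟩ | ⟨t, ht, rfl⟩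
    · exact hb i hi h
    · exact c1 _ ht
    · convert c2 t ht using 1; simp only [md]; push_cast; ring
    · convert c3 t ht using 1; simp only [md]; push_cast; ring
  · rcases bulk_odd k y w p q e₃ L j hj with
      ⟨i, hi, h⟩ | ⟨t, ht, rfl⟩ | ⟨t, ht, rfl⟩ | ⟨t, ht, rfl⟩ | ⟨t, ht, rfl⟩ | ⟨t, ht, rfl⟩ |
      ⟨t, ht, rfl⟩ | ⟨t, ht, rfl⟩ | ⟨t, ht, rfl⟩ | ⟨t, ht, rfl⟩
    · exact hb i hi h
    · exact d1 _ ht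
    · convert d2 t ht using 1; push_cast; ring
    · convert d3 t ht using 1; push_cast; ring
    · convert d4 t ht using 1; push_cast; ring
    · convert d5 t ht using 1; push_cast; ring
    · convert d6 t ht using 1; push_cast; ring
    · convert d7 t ht using 1; push_cast; ring
    · convert d8 t ht using 1; push_cast; ring
    · convert d9 t ht using 1; push_cast; ring

theorem coverB (L : ℕ) : mid 1 (8 + 4 * L) ∪ odl (16 + 8 * L) ⊆
    (sB L ∪ sC L) ∪ UU (bulk 1 3 1 1 3 L) L := by
  have h := bulk_cover 1 3 1 1 3 3 1 L ((sB L ∪ sC L) ∪ UU (bulk 1 3 1 1 3 L) L)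
    (fun i hi z hz => Or.inr ⟨i, hi, hz⟩)
  refine (Eq.subset ?_).trans (h ?_ ?_ ?_ ?_ ?_ ?_ ?_ ?_ ?_ ?_ ?_ ?_)
  · congr 2 <;> ring
  all_goals
    intro t ht
    left
    simp only [sB, sC, Set.mem_union, Set.mem_insert_iff, Set.mem_singleton_iff, or_assoc]
    interval_cases t <;>
      repeat (first | exact Or.inl (by omega) | apply Or.inr)
    all_goals omega

theorem coverE (L : ℕ) : mid 1 (12 + 4 * L) ∪ odl (18 + 8 * L) ⊆
    (sE L ∪ sF L) ∪ UU (bulk 1 3 3 1 2 L) L := by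
  have h := bulk_cover 1 3 3 1 2 5 0 L ((sE L ∪ sF L) ∪ UU (bulk 1 3 3 1 2 L) L)
    (fun i hi z hz => Or.inr ⟨i, hi, hz⟩)
  refine (Eq.subset ?_).trans (h ?_ ?_ ?_ ?_ ?_ ?_ ?_ ?_ ?_ ?_ ?_ ?_)
  · congr 2 <;> ring
  all_goals
    intro t ht
    left
    simp only [sE, sF, Set.mem_union, Set.mem_insert_iff, Set.mem_singleton_iff, or_assoc]
    interval_cases t <;>
      repeat (first | exact Or.inl (by omega) | apply Or.inr)
    all_goals omega

theorem coverH (L : ℕ) : mid 1 (9 + 4 * L) ∪ odl (12 + 8 * L) ⊆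
    (sH L ∪ sI L) ∪ UU (bulk 2 1 1 1 2 L) L := by
  have h := bulk_cover 2 1 1 1 2 5 0 L ((sH L ∪ sI L) ∪ UU (bulk 2 1 1 1 2 L) L)
    (fun i hi z hz => Or.inr ⟨i, hi, hz⟩)
  refine (Eq.subset ?_).trans (h ?_ ?_ ?_ ?_ ?_ ?_ ?_ ?_ ?_ ?_ ?_ ?_)
  · congr 2 <;> ring
  all_goals
    intro t ht
    left
    simp only [sH, sI, Set.mem_union, Set.mem_insert_iff, Set.mem_singleton_iff, or_assoc]
    interval_cases t <;>
      repeat (first | exact Or.inl (by omega) | apply Or.inr)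
    all_goals omega

theorem coverJ (L : ℕ) : mid 1 (11 + 4 * L) ∪ odl (16 + 8 * L) ⊆
    (sJ L ∪ sK L) ∪ UU (bulk 2 2 2 2 1 L) L := by
  have h := bulk_cover 2 2 2 2 1 5 0 L ((sJ L ∪ sK L) ∪ UU (bulk 2 2 2 2 1 L) L)
    (fun i hi z hz => Or.inr ⟨i, hi, hz⟩)
  refine (Eq.subset ?_).trans (h ?_ ?_ ?_ ?_ ?_ ?_ ?_ ?_ ?_ ?_ ?_ ?_)
  · congr 2 <;> ring
  all_goals
    intro t ht
    left
    simp only [sJ, sK, Set.mem_union, Set.mem_insert_iff, Set.mem_singleton_iff, or_assoc]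
    interval_cases t <;>
      repeat (first | exact Or.inl (by omega) | apply Or.inr)
    all_goals omega

/-- Put extra groups in front of a sequence of groups. -/
def pre (A : Set ℤ) (g : ℕ → Set ℤ) : ℕ → Set ℤ
  | 0 => A
  | i + 1 => g i

theorem pre_cover (A : Set ℤ) (g : ℕ → Set ℤ) (T : ℕ) : A ∪ UU g T ⊆ UU (pre A g) (T + 1) := by
  rintro z (h | ⟨i, hi, h⟩)
  · exact ⟨0, by omega, h⟩
  · exact ⟨i + 1, by omega, h⟩

theorem pre_all (P : Set ℤ → Prop) (A : Set ℤ) (g : ℕ → Set ℤ) (T : ℕ) (hA : P A)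
    (hg : ∀ i < T, P (g i)) : ∀ i < T + 1, P (pre A g i) := by
  intro i hi
  cases i with
  | zero => exact hA
  | succ i => exact hg i (by omega)

theorem des0 (T : ℕ) (hT : 1 ≤ T) : ∃ (g : ℕ → Set ℤ) (K l : ℕ), (∀ i < T, GG (g i)) ∧
    K + l = 12 * T ∧ mid 1 K ∪ odl l ⊆ UU g T := by
  obtain ⟨T, rfl⟩ := Nat.exists_eq_add_of_le' hT
  cases T with
  | zero =>
    refine ⟨fun _ => sA, 12, 0, fun i _ => ⟨sA3, sA5⟩, rfl, ?_⟩
    rintro z (⟨i, hi, rfl⟩ | ⟨i, hi, rfl⟩)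
    · refine ⟨0, by omega, ?_⟩
      interval_cases i <;> simp [sA, md]
    · omega
  | succ L =>
    refine ⟨pre (sB L) (pre (sC L) (bulk 1 3 1 1 3 L)), 8 + 4 * L, 16 + 8 * L, ?_, by omega, ?_⟩
    · exact pre_all _ _ _ _ ⟨sB3 L, sB5 L⟩ (pre_all _ _ _ _ ⟨sC3 L, sC5 L⟩ fun i _ => bulkG _ _ _ _ _ _ i)
    · refine (coverB L).trans (Set.Subset.trans ?_ (pre_cover _ _ _))
      rw [Set.union_assoc]
      exact Set.union_subset_union_right _ (pre_cover _ _ _)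

theorem des6 (T : ℕ) : ∃ (S : Set ℤ) (g : ℕ → Set ℤ) (K l : ℕ), HA 3 6 S ∧
    HA 5 6 (S ∪ mid (1 + K) 12) ∧ (∀ i < T, GG (g i)) ∧
    K + l = 18 + 12 * T ∧ mid 1 K ∪ odl l ⊆ S ∪ UU g T := by
  cases T with
  | zero =>
    refine ⟨sD, fun _ => ∅, 6, 12, sD3, sD5 _, by omega, rfl, ?_⟩
    rintro z (⟨i, hi, rfl⟩ | ⟨i, hi, rfl⟩)
    · left; interval_cases i <;> simp [sD, md]
    · left; interval_cases i <;> simp [sD]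
  | succ L =>
    refine ⟨sE L, pre (sF L) (bulk 1 3 3 1 2 L), 12 + 4 * L, 18 + 8 * L, sE3 L, sE5 L _,
      pre_all _ _ _ _ ⟨sF3 L, sF5 L⟩ fun i _ => bulkG _ _ _ _ _ _ i, by omega, ?_⟩
    refine (coverE L).trans ?_
    rw [Set.union_assoc]
    exact Set.union_subset_union_right _ (pre_cover _ _ _)

theorem des3 (T : ℕ) : ∃ (S : Set ℤ) (g : ℕ → Set ℤ) (K l : ℕ), HA 3 3 S ∧
    (∀ i < T, HA 3 4 (g i)) ∧ K + l = 9 + 12 * T ∧ mid 1 K ∪ odl l ⊆ S ∪ UU g T := by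
  cases T with
  | zero =>
    refine ⟨sG, fun _ => ∅, 5, 4, sG3, by omega, rfl, ?_⟩
    rintro z (⟨i, hi, rfl⟩ | ⟨i, hi, rfl⟩)
    · left; interval_cases i <;> simp [sG, md]
    · left; interval_cases i <;> simp [sG]
  | succ L =>
    refine ⟨sH L, pre (sI L) (bulk 2 1 1 1 2 L), 9 + 4 * L, 12 + 8 * L, sH3 L,
      pre_all _ _ _ _ (sI3 L) fun i _ => (bulkG _ _ _ _ _ _ i).1, by omega, ?_⟩
    refine (coverH L).trans ?_
    rw [Set.union_assoc]
    exact Set.union_subset_union_right _ (pre_cover _ _ _)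

theorem des5 (T : ℕ) : ∃ (S : Set ℤ) (g : ℕ → Set ℤ) (K l : ℕ), HA 3 5 S ∧
    HA 5 5 (S ∪ mid (1 + K) 10) ∧ (∀ i < T, GG (g i)) ∧
    K + l = 15 + 12 * T ∧ mid 1 K ∪ odl l ⊆ S ∪ UU g T := by
  cases T with
  | zero =>
    refine ⟨sG ∪ mid 6 6, fun _ => ∅, 11, 4, sG35 _, (sG5 6).mono ?_, by omega, rfl, ?_⟩
    · rintro z ((h | ⟨i, hi, rfl⟩) | ⟨i, hi, rfl⟩)
      · exact Or.inl h
      · exact Or.inr ⟨i, by omega, rfl⟩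
      · exact Or.inr ⟨i + 6, by omega, by simp only [md]; omega⟩
    rintro z (⟨i, hi, rfl⟩ | ⟨i, hi, rfl⟩)
    · left
      by_cases h : i < 5
      · left; interval_cases i <;> simp [sG, md]
      · exact Or.inr ⟨i - 5, by omega, by simp only [md]; omega⟩
    · left; left; interval_cases i <;> simp [sG]
  | succ L =>
    refine ⟨sJ L, pre (sK L) (bulk 2 2 2 2 1 L), 11 + 4 * L, 16 + 8 * L, sJ3 L, sJ5 L _,
      pre_all _ _ _ _ ⟨sK3 L, sK5 L⟩ fun i _ => bulkG _ _ _ _ _ _ i, by omega, ?_⟩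
    refine (coverJ L).trans ?_
    rw [Set.union_assoc]
    exact Set.union_subset_union_right _ (pre_cover _ _ _)

/-- Combine a cover by a core array with a final block. -/
theorem finish {m n c K l : ℕ} {S X : Set ℤ} (h : HA m n S) (hX : mid 1 K ∪ odl l ⊆ X)
    (hS : X ∪ mid (1 + K) c ⊆ S) (hc : K + l + c = m * n) : HE m n := by
  refine h.fin (K + c) l (by omega) ?_
  rintro z (hz | hz)
  · rcases mid_add _ _ _ hz with hz | hz
    · exact hS (Or.inl (hX (Or.inl hz)))
    · exact hS (Or.inr hz)
  · exact hS (Or.inl (hX (Or.inr hz)))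

theorem mb44 : MB 4 4 := b44
theorem mb46 : MB 4 6 := b46
theorem mb66 : MB 6 6 := b66

theorem mb4 (n : ℕ) (hn : 2 ≤ n) : MB 4 (2 * n) := by
  obtain ⟨t, rfl | rfl⟩ := Nat.even_or_odd' n
  · have := mb44.rep t
    rwa [show 2 * (2 * t) = 4 * t by ring]
  · obtain ⟨u, rfl⟩ := Nat.exists_eq_add_of_le' (show 1 ≤ t by omega)
    have := (mb44.rep u).app mb46
    rwa [show 2 * (2 * (u + 1) + 1) = 4 * u + 6 by ring]

theorem mb6 (n : ℕ) (hn : 2 ≤ n) : MB 6 (2 * n) := by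
  obtain ⟨t, rfl | rfl⟩ := Nat.even_or_odd' n
  · have := mb46.tr.rep t
    rwa [show 2 * (2 * t) = 4 * t by ring]
  · obtain ⟨u, rfl⟩ := Nat.exists_eq_add_of_le' (show 1 ≤ t by omega)
    have := (mb46.tr.rep u).app mb66
    rwa [show 2 * (2 * (u + 1) + 1) = 4 * u + 6 by ring]

theorem ee (m n : ℕ) (hm : 2 ≤ m) (hn : 2 ≤ n) : HE (2 * m) (2 * n) := by
  have h : MB (2 * m) (2 * n) := by
    obtain ⟨t, rfl | rfl⟩ := Nat.even_or_odd' m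
    · have := (mb4 n hn).vrep t
      rwa [show 2 * (2 * t) = 4 * t by ring]
    · obtain ⟨u, rfl⟩ := Nat.exists_eq_add_of_le' (show 1 ≤ t by omega)
      have := ((mb4 n hn).vrep u).vapp (mb6 n hn)
      rwa [show 2 * (2 * (u + 1) + 1) = 4 * u + 6 by ring]
  refine (h 1).fin (2 * m * (2 * n)) 0 rfl ?_
  rintro z (hz | ⟨i, hi, _⟩)
  · exact hz
  · omega

theorem o3e (s n : ℕ) (hn : 2 ≤ n) : HE (3 + 4 * s) (2 * n) := by
  have hM := (mb4 n hn).vrep s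
  obtain ⟨t, rfl | rfl⟩ := Nat.even_or_odd' n
  · obtain ⟨g, K, l, hg, hK, hc⟩ := des0 t (by omega)
    have h1 := strip3 g t fun i hi => (hg i hi).1
    rw [show 2 * (2 * t) = 4 * t by ring] at hM ⊢
    refine finish (h1.vapp (hM (1 + K))) hc subset_rfl ?_
    rw [hK]; ring
  · obtain ⟨u, rfl⟩ := Nat.exists_eq_add_of_le' (show 1 ≤ t by omega)
    obtain ⟨S, g, K, l, hS, -, hg, hK, hc⟩ := des6 u
    have h1 := strip3 g u fun i hi => (hg i hi).1
    rw [show 2 * (2 * (u + 1) + 1) = 6 + 4 * u by ring] at hM ⊢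
    refine finish ((hS.app h1).vapp (hM (1 + K))) hc subset_rfl ?_
    rw [hK]; ring

theorem o5e (s n : ℕ) (hn : 2 ≤ n) : HE (5 + 4 * s) (2 * n) := by
  have hM := (mb4 n hn).vrep s
  obtain ⟨t, rfl | rfl⟩ := Nat.even_or_odd' n
  · obtain ⟨g, K, l, hg, hK, hc⟩ := des0 t (by omega)
    have h1 := strip5 g t hg (1 + K)
    rw [show 2 * (2 * t) = 4 * t by ring] at hM ⊢
    refine finish (c := 8 * t + 4 * s * (4 * t))
      (h1.vapp (hM (1 + K + (8 * t : ℕ)))) hc ?_ ?_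
    · rintro z (hz | hz)
      · exact Or.inl (Or.inl hz)
      · rcases mid_add _ _ _ hz with hz | hz
        · exact Or.inl (Or.inr hz)
        · exact Or.inr hz
    · rw [hK]; ring
  · obtain ⟨u, rfl⟩ := Nat.exists_eq_add_of_le' (show 1 ≤ t by omega)
    obtain ⟨S, g, K, l, -, hS, hg, hK, hc⟩ := des6 u
    have h1 := strip5 g u hg (1 + K + (12 : ℕ))
    rw [show 2 * (2 * (u + 1) + 1) = 6 + 4 * u by ring] at hM ⊢
    refine finish (c := 12 + (8 * u + 4 * s * (6 + 4 * u)))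
      ((hS.app h1).vapp (hM (1 + K + (12 : ℕ) + (8 * u : ℕ)))) hc ?_ ?_
    · rintro z ((hz | hz) | hz)
      · exact Or.inl (Or.inl (Or.inl hz))
      · exact Or.inl (Or.inr (Or.inl hz))
      · rcases mid_add _ _ _ hz with hz | hz
        · exact Or.inl (Or.inl (Or.inr hz))
        · rcases mid_add _ _ _ hz with hz | hz
          · exact Or.inl (Or.inr (Or.inr hz))
          · exact Or.inr hz
    · rw [hK]; ring

theorem o33 (s t : ℕ) : HE (3 + 4 * s) (3 + 4 * t) := by
  have hM := (mb44.vrep s).rep t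
  obtain ⟨S, g, K, l, hS, hg, hK, hc⟩ := des3 (t + s)
  have h1 := strip3 g t fun i hi => hg i (by omega)
  have h2 := (strip3 (fun i => g (t + i)) s fun i hi => hg (t + i) (by omega)).tr
  refine finish (c := 4 * s * (4 * t)) ((hS.app h1).vapp (h2.app (hM (1 + K)))) hc ?_ (by rw [hK]; ring)
  rintro z ((hz | hz) | hz)
  · exact Or.inl (Or.inl hz)
  · rcases UU_add _ _ _ hz with hz | hz
    · exact Or.inl (Or.inr hz)
    · exact Or.inr (Or.inl hz)
  · exact Or.inr (Or.inr hz)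

theorem o35 (s t : ℕ) : HE (3 + 4 * s) (5 + 4 * t) := by
  have hM := (mb44.vrep s).rep t
  obtain ⟨S, g, K, l, hS, -, hg, hK, hc⟩ := des5 (t + s)
  have h1 := strip3 g t fun i hi => (hg i (by omega)).1
  have h2 := (strip5 (fun i => g (t + i)) s (fun i hi => hg (t + i) (by omega)) (1 + K)).tr
  refine finish (c := 8 * s + 4 * s * (4 * t))
    ((hS.app h1).vapp (h2.app (hM (1 + K + (8 * s : ℕ))))) hc ?_ (by rw [hK]; ring)
  rintro z ((hz | hz) | hz)
  · exact Or.inl (Or.inl hz)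
  · rcases UU_add _ _ _ hz with hz | hz
    · exact Or.inl (Or.inr hz)
    · exact Or.inr (Or.inl (Or.inl hz))
  · rcases mid_add _ _ _ hz with hz | hz
    · exact Or.inr (Or.inl (Or.inr hz))
    · exact Or.inr (Or.inr hz)

theorem o55 (s t : ℕ) : HE (5 + 4 * s) (5 + 4 * t) := by
  have hM := (mb44.vrep s).rep t
  obtain ⟨S, g, K, l, -, hS, hg, hK, hc⟩ := des5 (t + s)
  have h1 := strip5 g t (fun i hi => hg i (by omega)) (1 + K + (10 : ℕ))
  have h2 := (strip5 (fun i => g (t + i)) s (fun i hi => hg (t + i) (by omega))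
    (1 + K + (10 : ℕ) + (8 * t : ℕ))).tr
  refine finish (c := 10 + (8 * t + (8 * s + 4 * s * (4 * t))))
    ((hS.app h1).vapp (h2.app (hM (1 + K + (10 : ℕ) + (8 * t : ℕ) + (8 * s : ℕ))))) hc ?_
    (by rw [hK]; ring)
  rintro z ((hz | hz) | hz)
  · exact Or.inl (Or.inl (Or.inl hz))
  · rcases UU_add _ _ _ hz with hz | hz
    · exact Or.inl (Or.inr (Or.inl hz))
    · exact Or.inr (Or.inl (Or.inl hz))
  · rcases mid_add _ _ _ hz with hz | hz
    · exact Or.inl (Or.inl (Or.inr hz))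
    · rcases mid_add _ _ _ hz with hz | hz
      · exact Or.inl (Or.inr (Or.inr hz))
      · rcases mid_add _ _ _ hz with hz | hz
        · exact Or.inr (Or.inl (Or.inr hz))
        · exact Or.inr (Or.inr hz)

theorem HE.tr {m n : ℕ} (h : HE m n) : HE n m := by
  obtain ⟨A, h1, h2, h3⟩ := h
  have e : 2 * n * m + 1 = 2 * m * n + 1 := by ring
  unfold HE
  rw [e]
  refine ⟨fun i j => A j i, h2, h1, fun x hx => ?_⟩
  obtain ⟨p, hp, hu⟩ := h3 x hx
  refine ⟨p.swap, hp, fun q hq => ?_⟩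
  rw [← hu q.swap hq, Prod.swap_swap]

theorem HE.ex {m n : ℕ} (hm : 3 ≤ m) (hn : 3 ≤ n) : HE m n := by
  have key : ∀ a : ℕ, 3 ≤ a → (∃ b, 2 ≤ b ∧ a = 2 * b) ∨ (∃ s, a = 3 + 4 * s) ∨
      (∃ s, a = 5 + 4 * s) := by
    intro a ha
    rcases Nat.even_or_odd' a with ⟨b, hb | hb⟩
    · exact Or.inl ⟨b, by omega, hb⟩
    · rcases Nat.even_or_odd' b with ⟨c, hc | hc⟩
      · exact Or.inr (Or.inr ⟨c - 1, by omega⟩)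
      · exact Or.inr (Or.inl ⟨c, by omega⟩)
  rcases key m hm with ⟨b, hb, rfl⟩ | ⟨s, rfl⟩ | ⟨s, rfl⟩ <;>
    rcases key n hn with ⟨c, hc, rfl⟩ | ⟨t, rfl⟩ | ⟨t, rfl⟩
  · exact ee b c hb hc
  · exact (o3e t b hb).tr
  · exact (o5e t b hb).tr
  · exact o3e s c hc
  · exact o33 s t
  · exact o35 s t
  · exact o5e s c hc
  · exact (o35 t s).tr
  · exact o55 s t

theorem HE.nec {m n : ℕ} (hm : 0 < m) (hn : 0 < n) (h : HE m n) : 3 ≤ m := by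
  obtain ⟨A, -, h2, h3⟩ := h
  have hmn : 0 < m * n := Nat.mul_pos hm hn
  have h1 : (1 : ZMod (2 * m * n + 1)) ≠ 0 := by
    have : Fact (1 < 2 * m * n + 1) := ⟨by rw [mul_assoc]; omega⟩
    exact one_ne_zero
  obtain ⟨⟨i, j⟩, hp, hu⟩ := h3 1 h1
  by_contra hlt
  obtain rfl | rfl : m = 1 ∨ m = 2 := by omega
  · have := h2 j
    rw [Fin.sum_univ_one] at this
    obtain rfl : i = 0 := Subsingleton.elim _ _
    simp only [this] at hp
    rcases hp with hp | hp
    · exact h1 hp.symm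
    · exact h1 (by rw [← neg_neg (1 : ZMod _), ← hp, neg_zero])
  · have hs := h2 j
    rw [Fin.sum_univ_two] at hs
    have hc : A 1 j = - A 0 j := eq_neg_of_add_eq_zero_right hs
    have hc' : A 0 j = - A 1 j := by rw [hc, neg_neg]
    have flip : ∀ a b : ZMod (2 * 2 * n + 1), a = -b → (b = 1 ∨ b = -1) → (a = 1 ∨ a = -1) := by
      rintro a b rfl (rfl | rfl)
      · exact Or.inr rfl
      · exact Or.inl (neg_neg 1)
    have both : ∀ k : Fin 2, A k j = 1 ∨ A k j = -1 := by
      have hp' : A i j = 1 ∨ A i j = -1 := hp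
      intro k
      fin_cases i <;> fin_cases k
      · exact hp'
      · exact flip _ _ hc hp'
      · exact flip _ _ hc' hp'
      · exact hp'
    have e0 := hu (0, j) (both 0)
    have e1 := hu (1, j) (both 1)
    have := congrArg Prod.fst (e0.trans e1.symm)
    simp at this

/-- There exists a totally filled Heffter array `H(m,n)` if and only if `m, n ≥ 3`. -/
theorem heffter_array_total_exists_iff (m n : ℕ) (hm : 0 < m) (hn : 0 < n) :
    (∃ A : Fin m → Fin n → ZMod (2 * m * n + 1),
      (∀ i : Fin m, ∑ j : Fin n, A i j = 0) ∧
      (∀ j : Fin n, ∑ i : Fin m, A i j = 0) ∧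
      (∀ x : ZMod (2 * m * n + 1), x ≠ 0 →
        ∃! p : Fin m × Fin n, A p.1 p.2 = x ∨ A p.1 p.2 = -x))
    ↔ (3 ≤ m ∧ 3 ≤ n) := by
  exact ⟨fun h => ⟨HE.nec hm hn h, HE.nec hn hm (HE.tr h)⟩, fun h => HE.ex h.1 h.2⟩
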